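/- arXiv:1506.06819 — 4 statements merged into one kernel-verified Lean document; each statement's English description precedes it below -/
import Mathlib

section
/- Let d ≥ 1 and let ∂_0, ∂_1, …, ∂_d be the boundary matrices of a d-dimensional cell complex X (integer matrices with ∂_{k−1}∂_k = 0 for 1 ≤ k ≤ d, where ∂_0 is the all-ones row vector indexed by the 0-cells). Suppose X is ℤ-acyclic in positive codimension, i.e., ker_ℤ(∂_k) = im_ℤ(∂_{k+1}) for all 0 ≤ k ≤ d−1. Then τ_d(X) · ∏_{0 ≤ i ≤ d, d−i odd} λ(∂_i ∂_iᵀ) = ∏_{0 ≤ i ≤ d, d−i even} λ(∂_i ∂_iᵀ), where λ denotes the pseudodeterminant of the corresponding real matrix; equivalently, τ_d(X) = ∏_{i=0}^{d} λ(∂_i ∂_iᵀ)^{(−1)^{d−i}}. -/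
open Matrix

/-- The pseudodeterminant of a square integer matrix: the product of its nonzero
eigenvalues (roots of the characteristic polynomial over `ℂ`), counted with algebraic
multiplicity; it equals `1` if all eigenvalues are zero. -/
noncomputable def pseudoDet {N : Type*} [Fintype N] [DecidableEq N]
    (M : Matrix N N ℤ) : ℂ :=
  (((M.map (Int.cast : ℤ → ℂ)).charpoly.roots).filter (· ≠ 0)).prod

namespace APTC

lemma filter_roots_mul_X (n : ℕ) (p : Polynomial ℂ) (hp : p ≠ 0) :
    (Polynomial.X ^ n * p).roots.filter (· ≠ 0) = p.roots.filter (· ≠ 0) := by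
  rw [Polynomial.roots_mul (mul_ne_zero (pow_ne_zero _ Polynomial.X_ne_zero) hp),
    Polynomial.roots_pow, Polynomial.roots_X, Multiset.filter_add]
  have : Multiset.filter (fun x : ℂ => x ≠ 0) (n • {0}) = 0 := by
    rw [Multiset.filter_eq_nil]
    intro a ha
    have := Multiset.mem_of_mem_nsmul ha
    simpa using this
  rw [this, zero_add]

/-- Gram determinant is nonzero for injective integer matrices. -/
lemma gram_ne_zero {m r : ℕ} (B : Matrix (Fin m) (Fin r) ℤ)
    (hB : Function.Injective B.mulVec) : (Bᵀ * B).det ≠ 0 := by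
  intro h
  obtain ⟨v, hv, h0⟩ := Matrix.exists_mulVec_eq_zero_iff.mpr h
  apply hv
  apply hB
  rw [mulVec_zero]
  have : (B *ᵥ v) ⬝ᵥ (B *ᵥ v) = 0 := by
    rw [← mulVec_mulVec] at h0
    rw [dotProduct_mulVec, ← mulVec_transpose, h0, zero_dotProduct]
  exact dotProduct_self_eq_zero.mp this

lemma pseudoDet_factor {m n r : ℕ} (B : Matrix (Fin m) (Fin r) ℤ)
    (C : Matrix (Fin r) (Fin n) ℤ) (hB : (Bᵀ * B).det ≠ 0) (hC : (C * Cᵀ).det ≠ 0) :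
    pseudoDet ((B * C) * (B * C)ᵀ) = (((Bᵀ * B).det * (C * Cᵀ).det : ℤ) : ℂ) := by
  set f : ℤ →+* ℂ := Int.castRingHom ℂ with hf
  have e1 : ((B * C) * (B * C)ᵀ).map (Int.cast : ℤ → ℂ)
      = B.map f * ((C * Cᵀ) * Bᵀ).map f := by
    rw [← Matrix.map_mul, transpose_mul]
    simp only [Matrix.mul_assoc]
    rfl
  have h2 : (((C * Cᵀ) * Bᵀ).map f * B.map f).det
      = (((Bᵀ * B).det * (C * Cᵀ).det : ℤ) : ℂ) := by
    rw [← Matrix.map_mul, Matrix.mul_assoc, mul_comm, ← Matrix.det_mul]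
    exact (f.map_det _).symm
  unfold pseudoDet
  rw [e1, ← filter_roots_mul_X (Fintype.card (Fin r)) _ (Matrix.charpoly_monic _).ne_zero,
    Matrix.charpoly_mul_comm', filter_roots_mul_X _ _ (Matrix.charpoly_monic _).ne_zero, ← h2,
    Matrix.det_eq_prod_roots_charpoly]
  congr 1
  rw [Multiset.filter_eq_self]
  rintro x hx rfl
  have h3 := Multiset.prod_eq_zero hx
  rw [← Matrix.det_eq_prod_roots_charpoly, h2] at h3
  exact mul_ne_zero hB hC (by exact_mod_cast h3)

lemma compl_gram {n s r : ℕ} (B : Matrix (Fin n) (Fin s) ℤ) (C : Matrix (Fin r) (Fin n) ℤ)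
    (S : Matrix (Fin n) (Fin r) ℤ) (hB : Function.Injective B.mulVec) (hCS : C * S = 1)
    (hCB : C * B = 0) (hex : ∀ x, C *ᵥ x = 0 → ∃ y, B *ᵥ y = x) :
    (C * Cᵀ).det = (Bᵀ * B).det := by
  have h1 : ∀ j, ∃ y, B *ᵥ y = (1 - S * C).col j := by
    intro j
    apply hex
    have : C * (1 - S * C) = 0 := by
      rw [Matrix.mul_sub, ← Matrix.mul_assoc, hCS]; simp
    ext i
    exact congrFun (congrFun this i) j
  choose p hp using h1
  obtain ⟨P, hP⟩ : ∃ P : Matrix (Fin s) (Fin n) ℤ, B * P = 1 - S * C := by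
    refine ⟨(Matrix.of p)ᵀ, ?_⟩
    ext i j
    exact congrFun (hp j) i
  have hinj : ∀ {t : ℕ} (X Y : Matrix (Fin s) (Fin t) ℤ), B * X = B * Y → X = Y := by
    intro t X Y h
    ext i j
    have : X.col j = Y.col j := hB (by
      ext k
      exact congrFun (congrFun h k) j)
    exact congrFun this i
  have hPB : P * B = 1 := by
    apply hinj
    rw [← Matrix.mul_assoc, hP, Matrix.sub_mul, Matrix.mul_assoc, hCB]; simp
  have hPS : P * S = 0 := by
    apply hinj
    rw [← Matrix.mul_assoc, hP, Matrix.sub_mul, Matrix.mul_assoc, hCS]; simp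
  set M := fromCols B S with hM
  set M' := fromRows P C with hM'
  have hMM' : M * M' = 1 := by
    rw [hM, hM', fromCols_mul_fromRows, hP]; simp
  have hM'M : M' * M = 1 := by
    rw [hM, hM', fromRows_mul_fromCols, hPB, hPS, hCB, hCS, fromBlocks_one]
  have hcard : Fintype.card (Fin n) = Fintype.card (Fin s ⊕ Fin r) :=
    Matrix.square_of_invertible M M' hMM' hM'M
  let e : (Fin s ⊕ Fin r) ≃ Fin n := (Fintype.equivOfCardEq hcard).symm
  have hdet : (Mᵀ * M).det = 1 := by
    have a1 : Mᵀ * M = (M.submatrix e id)ᵀ * (M.submatrix e id) := by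
      rw [transpose_submatrix, submatrix_mul_equiv]; simp
    have a2 : (M'.submatrix id e) * (M.submatrix e id) = 1 := by
      rw [submatrix_mul_equiv, hM'M]; simp
    have a3 := congrArg Matrix.det a2
    rw [det_mul, det_one] at a3
    rw [a1, det_mul, det_transpose]
    rcases Int.eq_one_or_neg_one_of_mul_eq_one' a3 with ⟨_, h⟩ | ⟨_, h⟩ <;> rw [h] <;> norm_num
  have key : (Mᵀ * M) * fromBlocks 1 (P * Cᵀ) 0 (C * Cᵀ) = fromBlocks (Bᵀ * B) 0 (Sᵀ * B) 1 := by
    have b1 : fromBlocks 1 (P * Cᵀ) 0 (C * Cᵀ) = M' * fromCols B Cᵀ := by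
      rw [hM', fromRows_mul_fromCols, hPB, hCB]
    rw [b1, Matrix.mul_assoc, ← Matrix.mul_assoc M, hMM', Matrix.one_mul, hM, transpose_fromCols,
      fromRows_mul_fromCols, ← transpose_mul, ← transpose_mul, hCB, hCS]
    simp
  have := congrArg Matrix.det key
  rw [det_mul, hdet, det_fromBlocks_zero₂₁, det_fromBlocks_zero₁₂] at this
  simpa using this

lemma det_mul_expand {r n : ℕ} (C : Matrix (Fin r) (Fin n) ℤ) (D : Matrix (Fin n) (Fin r) ℤ) :
    (C * D).det = ∑ p : Fin r → Fin n, (∏ i, C i (p i)) * (D.submatrix p id).det := by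
  have : (C * D) = fun i => ∑ j, C i j • D j := by
    ext i k
    simp [Matrix.mul_apply]
  rw [this]
  change (detRowAlternating : (Fin r → ℤ) [⋀^Fin r]→ₗ[ℤ] ℤ).toMultilinearMap _ = _
  rw [MultilinearMap.map_sum]
  refine Finset.sum_congr rfl fun p _ => ?_
  rw [MultilinearMap.map_smul_univ]
  rfl

lemma cauchy_binet {r n : ℕ} (C : Matrix (Fin r) (Fin n) ℤ) (D : Matrix (Fin n) (Fin r) ℤ)
    (g : Finset (Fin n) → Fin r → Fin n)
    (hg : ∀ T, T.card = r → Function.Injective (g T) ∧ Finset.univ.image (g T) = T) :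
    (C * D).det = ∑ T : Finset (Fin n) with T.card = r,
      (C.submatrix id (g T)).det * (D.submatrix (g T) id).det := by
  classical
  rw [det_mul_expand, ← Finset.sum_fiberwise _ (fun p : Fin r → Fin n => Finset.univ.image p),
    Finset.sum_filter]
  refine Finset.sum_congr rfl fun T _ => ?_
  have hz : ∀ p : Fin r → Fin n, ¬ Function.Injective p → (D.submatrix p id).det = 0 := by
    intro p hp
    simp only [Function.Injective, not_forall] at hp
    obtain ⟨i, j, hij, hne⟩ := hp
    exact Matrix.det_zero_of_row_eq hne (by ext k; simp [hij])
  split_ifs with hT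
  · obtain ⟨hi, him⟩ := hg T hT
    rw [← det_mul]
    obtain ⟨D', hD'⟩ : ∃ D' : Matrix (Fin n) (Fin r) ℤ,
        ∀ i j, D' i j = if i ∈ T then D i j else 0 := ⟨Matrix.of fun i j => _, fun i j => rfl⟩
    have e1 : C.submatrix id (g T) * D.submatrix (g T) id = C * D' := by
      ext i j
      simp only [Matrix.mul_apply, submatrix_apply, id, hD', mul_ite, mul_zero]
      rw [← Finset.sum_filter, Finset.filter_mem_eq_inter, Finset.univ_inter]
      conv_rhs => rw [← him]
      rw [Finset.sum_image (fun a _ b _ h => hi h)]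
    rw [e1, det_mul_expand, Finset.sum_filter]
    refine Finset.sum_congr rfl fun p _ => ?_
    by_cases hp : Function.Injective p
    · split_ifs with h
      · congr 2
        ext i j
        have : p i ∈ T := h ▸ Finset.mem_image_of_mem p (Finset.mem_univ i)
        simp [hD', this]
      · symm
        have : ∃ i, p i ∉ T := by
          by_contra hc
          push Not at hc
          apply h
          apply Finset.eq_of_subset_of_card_le
          · intro x hx
            obtain ⟨i, _, rfl⟩ := Finset.mem_image.mp hx
            exact hc i
          · rw [Finset.card_image_of_injective _ hp, hT]; simp
        obtain ⟨i, hi⟩ := this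
        rw [Matrix.det_eq_zero_of_row_eq_zero i (by intro j; simp [hD', hi]), mul_zero]
    · have h' : (D'.submatrix p id).det = 0 := by
        simp only [Function.Injective, not_forall] at hp
        obtain ⟨i, j, hij, hne⟩ := hp
        exact Matrix.det_zero_of_row_eq hne (by ext k; simp [hij])
      rw [h', hz p hp]; simp
  · apply Finset.sum_eq_zero
    intro p hp
    rw [hz, mul_zero]
    intro hi
    apply hT
    rw [← (Finset.mem_filter.mp hp).2, Finset.card_image_of_injective _ hi]; simp

lemma factor {m n : ℕ} (A : Matrix (Fin m) (Fin n) ℤ) :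
    ∃ (r : ℕ) (B : Matrix (Fin m) (Fin r) ℤ) (C : Matrix (Fin r) (Fin n) ℤ)
      (S : Matrix (Fin n) (Fin r) ℤ), A = B * C ∧ Function.Injective B.mulVec ∧ C * S = 1 := by
  let b := Module.finBasis ℤ (LinearMap.range A.mulVecLin)
  let B : Matrix (Fin m) (Fin _) ℤ := fun i j => (b j).1 i
  have hBv : ∀ v, B *ᵥ v = ((∑ j, v j • b j : LinearMap.range A.mulVecLin) : Fin m → ℤ) := by
    intro v
    ext i
    simp [B, Matrix.mulVec, dotProduct, mul_comm]
  have hinj : Function.Injective B.mulVec := by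
    intro v w h
    rw [hBv, hBv] at h
    have h := Subtype.ext h
    have := congrArg b.equivFun h
    rwa [← b.equivFun_symm_apply, ← b.equivFun_symm_apply, LinearEquiv.apply_symm_apply,
      LinearEquiv.apply_symm_apply] at this
  have h1 : ∀ j, ∃ v, B *ᵥ v = A.col j := by
    intro j
    refine ⟨b.equivFun ⟨A *ᵥ Pi.single j 1, ⟨_, rfl⟩⟩, ?_⟩
    rw [hBv, b.sum_equivFun]; simp
  choose c hc using h1
  have h2 : ∀ k, ∃ x, A *ᵥ x = B *ᵥ Pi.single k 1 := by
    intro k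
    obtain ⟨x, hx⟩ := (b k).2
    refine ⟨x, ?_⟩
    rw [mulVec_single_one]
    exact hx
  choose s hs using h2
  have hA : A = B * (Matrix.of c)ᵀ := by
    ext i j
    exact (congrFun (hc j) i).symm
  refine ⟨_, B, (Matrix.of c)ᵀ, (Matrix.of s)ᵀ, hA, hinj, ?_⟩
  apply Matrix.ext_of_mulVec_single
  intro k
  apply hinj
  rw [one_mulVec, mulVec_mulVec, ← Matrix.mul_assoc, ← hA, ← hs, ← mulVec_mulVec]
  congr 1
  rw [mulVec_single_one]; rfl

lemma li_iff_gram {m r : ℕ} (M : Matrix (Fin m) (Fin r) ℤ) :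
    LinearIndependent ℚ (fun i : Fin r => fun σ => ((M σ i : ℤ) : ℚ)) ↔ (Mᵀ * M).det ≠ 0 := by
  set N : Matrix (Fin m) (Fin r) ℚ := M.map (Int.cast : ℤ → ℚ) with hN
  have h1 : (((Mᵀ * M).det : ℤ) : ℚ) = (Nᵀ * N).det := by
    rw [Int.cast_det]
    congr 1
    ext i j
    simp [Matrix.mul_apply, hN]
  have h2 : (Mᵀ * M).det ≠ 0 ↔ (Nᵀ * N).det ≠ 0 := by
    rw [← h1]; simp
  rw [h2]
  change LinearIndependent ℚ N.col ↔ _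
  rw [← Matrix.mulVec_injective_iff, ← isUnit_iff_ne_zero, ← Matrix.isUnit_iff_isUnit_det,
    ← Matrix.mulVec_injective_iff_isUnit]
  have := Matrix.ker_mulVecLin_transpose_mul_self N
  change Function.Injective N.mulVecLin ↔ Function.Injective (Nᵀ * N).mulVecLin
  rw [← LinearMap.ker_eq_bot, ← LinearMap.ker_eq_bot, this]

lemma rank_eq {m n r : ℕ} (B : Matrix (Fin m) (Fin r) ℤ) (C : Matrix (Fin r) (Fin n) ℤ)
    (S : Matrix (Fin n) (Fin r) ℤ) (hB : Function.Injective B.mulVec) (hCS : C * S = 1) :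
    ((B * C).map (Int.cast : ℤ → ℚ)).rank = r := by
  have hmap : ∀ {a b c : ℕ} (X : Matrix (Fin a) (Fin b) ℤ) (Y : Matrix (Fin b) (Fin c) ℤ),
      (X * Y).map (Int.cast : ℤ → ℚ) = X.map Int.cast * Y.map Int.cast := by
    intro a b c X Y
    exact Matrix.map_mul (f := Int.castRingHom ℚ)
  apply le_antisymm
  · rw [hmap]
    refine (Matrix.rank_mul_le_left _ _).trans ?_
    simpa using Matrix.rank_le_card_width (B.map (Int.cast : ℤ → ℚ))
  · have h1 : (B.map (Int.cast : ℤ → ℚ)).rank = r := by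
      have := (li_iff_gram B).mpr (gram_ne_zero B hB)
      have := LinearIndependent.rank_matrix (M := (B.map (Int.cast : ℤ → ℚ))ᵀ) this
      rw [Matrix.rank_transpose] at this
      simpa using this
    have h2 : B.map (Int.cast : ℤ → ℚ) = (B * C).map Int.cast * S.map Int.cast := by
      rw [← hmap, Matrix.mul_assoc, hCS, Matrix.mul_one]
    conv_lhs => rw [← h1, h2]
    exact Matrix.rank_mul_le_left _ _

lemma card_quot {m r : ℕ} (K : Submodule ℤ (Fin m → ℤ))
    (B : Matrix (Fin m) (Fin r) ℤ) (hB : Function.Injective B.mulVec)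
    (hK : K = LinearMap.range B.mulVecLin) (Q : Matrix (Fin r) (Fin r) ℤ) (hQ : Q.det ≠ 0)
    (V : Set (Fin m → ℤ)) (hV : V = Set.range (B * Q).col) :
    Nat.card (Submodule.torsion ℤ (K ⧸ Submodule.comap K.subtype (Submodule.span ℤ V)))
      = Q.det.natAbs := by
  let φ : (Fin r → ℤ) ≃ₗ[ℤ] K :=
    (LinearEquiv.ofInjective B.mulVecLin hB).trans (LinearEquiv.ofEq _ _ hK.symm)
  have hφ : ∀ v, (φ v : Fin m → ℤ) = B *ᵥ v := fun v => rfl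
  let b : Module.Basis (Fin r) ℤ K := (Pi.basisFun ℤ (Fin r)).map φ
  let v : Fin r → K := fun i => φ (Q.col i)
  have hN : Submodule.comap K.subtype (Submodule.span ℤ V) = Submodule.span ℤ (Set.range v) := by
    apply Submodule.map_injective_of_injective K.injective_subtype
    rw [Submodule.map_comap_eq, Submodule.map_span, Submodule.range_subtype]
    have : K.subtype '' Set.range v = V := by
      rw [← Set.range_comp, hV]
      congr 1
    rw [this, inf_eq_right, Submodule.span_le, ← this]
    rintro _ ⟨x, _, rfl⟩
    exact x.2
  have hbv : b.toMatrix v = Q := by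
    ext i j
    simp [b, v, Module.Basis.toMatrix_apply]
  have hdet : b.det v = Q.det := by rw [Module.Basis.det_apply, hbv]
  have hli : LinearIndependent ℤ v := by
    have : LinearIndependent ℤ Q.col := by
      rw [← Matrix.mulVec_injective_iff, ← Matrix.coe_mulVecLin, ← LinearMap.ker_eq_bot,
        LinearMap.ker_eq_bot']
      intro w hw
      by_contra hne
      exact hQ (Matrix.exists_mulVec_eq_zero_iff.mp ⟨w, hne, hw⟩)
    exact this.map' φ.toLinearMap φ.ker
  rw [hN]
  have : Module.Free ℤ K := Module.Free.of_basis b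
  have : Module.Finite ℤ K := Module.Finite.of_basis b
  have hc := Submodule.natAbs_det_basis_change b _ (Module.Basis.span hli)
  have : (fun x : Submodule.span ℤ (Set.range v) => (x : K)) ∘ (Module.Basis.span hli) = v := by
    ext1 i
    simp [Module.Basis.span_apply]
  rw [this, hdet] at hc
  rw [hc]
  have hpos : Nat.card (K ⧸ Submodule.span ℤ (Set.range v)) ≠ 0 := by
    rw [← hc]; simpa using hQ
  have htop : Submodule.torsion ℤ (K ⧸ Submodule.span ℤ (Set.range v)) = ⊤ := by
    rw [eq_top_iff]
    intro x _
    rw [Submodule.mem_torsion_iff]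
    refine ⟨⟨(Nat.card (K ⧸ Submodule.span ℤ (Set.range v)) : ℤ), ?_⟩, ?_⟩
    · rw [mem_nonZeroDivisors_iff_ne_zero]; exact_mod_cast hpos
    · change ((Nat.card (K ⧸ Submodule.span ℤ (Set.range v)) : ℤ)) • x = 0
      rw [natCast_zsmul]
      exact card_nsmul_eq_zero'
  rw [htop]
  exact Nat.card_congr (Equiv.Set.univ _)

lemma tau_eq {l m n r : ℕ} (Z : Matrix (Fin l) (Fin m) ℤ) (A : Matrix (Fin m) (Fin n) ℤ)
    (hex : LinearMap.ker Z.mulVecLin = LinearMap.range A.mulVecLin)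
    (B : Matrix (Fin m) (Fin r) ℤ) (C : Matrix (Fin r) (Fin n) ℤ)
    (S : Matrix (Fin n) (Fin r) ℤ) (hA : A = B * C) (hB : Function.Injective B.mulVec)
    (hCS : C * S = 1) :
    ((∑ᶠ T ∈ {T : Finset (Fin n) |
        LinearIndependent ℚ (fun τ : T => fun σ => ((A σ τ.1 : ℤ) : ℚ)) ∧
        T.card = (A.map (Int.cast : ℤ → ℚ)).rank},
      (Nat.card (Submodule.torsion ℤ (LinearMap.ker Z.mulVecLin ⧸
        Submodule.comap (LinearMap.ker Z.mulVecLin).subtype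
          (Submodule.span ℤ ((fun τ => Aᵀ τ) '' (T : Set (Fin n))))))) ^ 2 : ℕ) : ℤ)
      = (C * Cᵀ).det := by
  classical
  have hrank : (A.map (Int.cast : ℤ → ℚ)).rank = r := by rw [hA]; exact rank_eq B C S hB hCS
  have hrange : LinearMap.range A.mulVecLin = LinearMap.range B.mulVecLin := by
    apply le_antisymm
    · rintro _ ⟨x, rfl⟩
      exact ⟨C *ᵥ x, by simp [hA]⟩
    · rintro _ ⟨x, rfl⟩
      exact ⟨S *ᵥ x, by simp [hA, Matrix.mul_assoc, hCS]⟩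
  have hgex : ∀ T : Finset (Fin n), ∃ g : Fin r → Fin n, T.card = r →
      ∃ e : Fin r ≃ T, ∀ i, g i = (e i : Fin n) := by
    intro T
    by_cases hT : T.card = r
    · exact ⟨fun i => ((T.equivFinOfCardEq hT).symm i : Fin n), fun _ => ⟨_, fun i => rfl⟩⟩
    · by_cases hr : Nonempty (Fin r → Fin n)
      · exact ⟨hr.some, fun h => absurd h hT⟩
      · exfalso
        apply hr
        refine ⟨fun i => Classical.choice ?_⟩
        by_contra hne
        have h0 : IsEmpty (Fin n) := not_nonempty_iff.mp hne
        have := congrFun (congrFun hCS i) i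
        rw [Matrix.mul_apply] at this
        simp at this
  choose g hge using hgex
  have hg : ∀ T, T.card = r → Function.Injective (g T) ∧ Finset.univ.image (g T) = T := by
    intro T hT
    obtain ⟨e, he⟩ := hge T hT
    constructor
    · intro i j h
      rw [he, he] at h
      exact e.injective (Subtype.ext h)
    · ext x
      simp only [Finset.mem_image, Finset.mem_univ, true_and]
      constructor
      · rintro ⟨i, rfl⟩
        rw [he]; exact (e i).2
      · intro hx
        exact ⟨e.symm ⟨x, hx⟩, by rw [he]; simp⟩
  have hcol : ∀ T, A.submatrix id (g T) = B * C.submatrix id (g T) := by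
    intro T
    rw [hA]
    ext i j
    simp [Matrix.mul_apply]
  have hli : ∀ T : Finset (Fin n), T.card = r →
      (LinearIndependent ℚ (fun τ : T => fun σ => ((A σ τ.1 : ℤ) : ℚ)) ↔
        (C.submatrix id (g T)).det ≠ 0) := by
    intro T hT
    obtain ⟨e, he⟩ := hge T hT
    rw [← linearIndependent_equiv e]
    have h1 : ((fun τ : T => fun σ => ((A σ τ.1 : ℤ) : ℚ)) ∘ e)
        = fun i : Fin r => fun σ => (((A.submatrix id (g T)) σ i : ℤ) : ℚ) := by
      ext i σ
      simp [he]
    rw [h1, li_iff_gram, hcol, transpose_mul, Matrix.mul_assoc, ← Matrix.mul_assoc Bᵀ, det_mul,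
      det_mul, det_transpose]
    have := gram_ne_zero B hB
    simp [this]
  rw [cauchy_binet C Cᵀ g hg]
  rw [finsum_mem_eq_finite_toFinset_sum _ (Set.toFinite _)]
  push_cast
  refine Finset.sum_subset_zero_on_sdiff ?_ ?_ ?_
  · intro T hT
    simp only [Set.Finite.mem_toFinset, Set.mem_ofPred_eq] at hT
    simp [hT.2, hrank]
  · intro T hT
    simp only [Finset.mem_sdiff, Finset.mem_filter, Finset.mem_univ, true_and,
      Set.Finite.mem_toFinset, Set.mem_ofPred_eq] at hT
    have : (C.submatrix id (g T)).det = 0 := by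
      by_contra h
      exact hT.2 ⟨(hli T hT.1).mpr h, by rw [hrank, hT.1]⟩
    rw [this, zero_mul]
  · intro T hT
    simp only [Set.Finite.mem_toFinset, Set.mem_ofPred_eq] at hT
    have hTr : T.card = r := hT.2.trans hrank
    have hd := (hli T hTr).mp hT.1
    rw [card_quot _ B hB (hex.trans hrange) (C.submatrix id (g T)) hd]
    · rw [← transpose_submatrix, det_transpose, Int.natCast_natAbs, sq_abs, sq]
    · rw [← hcol]
      ext x
      simp only [Set.mem_image, Set.mem_range]
      conv_lhs => rw [← (hg T hTr).2]
      simp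
      rfl

lemma prod_step (l D : ℕ → ℂ) (e : ℕ) (hD0 : D 0 = 1)
    (h : ∀ k ≤ e, l k = D k * D (k + 1)) (n : ℕ) (hn : n ≤ e + 1) :
    ∏ i ∈ (Finset.range n).filter (fun i => (n - i) % 2 = 1), l i =
      D n * ∏ i ∈ (Finset.range n).filter (fun i => (n - i) % 2 = 0), l i := by
  induction n with
  | zero => simp [hD0]
  | succ n ih =>
    have ih := ih (by omega)
    have h1 : (Finset.range (n + 1)).filter (fun i => (n + 1 - i) % 2 = 1) =
        insert n ((Finset.range n).filter (fun i => (n - i) % 2 = 0)) := by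
      ext i; simp only [Finset.mem_filter, Finset.mem_range, Finset.mem_insert]; omega
    have h2 : (Finset.range (n + 1)).filter (fun i => (n + 1 - i) % 2 = 0) =
        (Finset.range n).filter (fun i => (n - i) % 2 = 1) := by
      ext i; simp only [Finset.mem_filter, Finset.mem_range]; omega
    rw [h1, h2, Finset.prod_insert (by simp), ih, h n (by omega)]
    ring

end APTC

/-- **The alternating-product cellular matrix-tree theorem** (`ℤ`-APC case).
Here `d = e + 1 ≥ 1`; `a (k+1)` is the number of `k`-cells (and `a 0 = 1` accounts for
the empty cell), and `bd k` is the `k`-th boundary matrix, with `bd 0` the all-ones row.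
If `ker_ℤ ∂_k = im_ℤ ∂_{k+1}` for all `0 ≤ k ≤ d - 1`, then
`τ_d(X) · ∏_{d-i odd} λ(∂_i ∂_iᵀ) = ∏_{d-i even} λ(∂_i ∂_iᵀ)`,
i.e. `τ_d(X) = ∏_{i=0}^d λ(∂_i ∂_iᵀ)^((-1)^(d-i))`. -/
theorem alternating_product_tree_count (e : ℕ) (a : ℕ → ℕ) (ha : a 0 = 1)
    (bd : (k : ℕ) → Matrix (Fin (a k)) (Fin (a (k + 1))) ℤ)
    (h0 : ∀ i j, bd 0 i j = 1)
    (hchain : ∀ k ≤ e, bd k * bd (k + 1) = 0)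
    (hacyclic : ∀ k ≤ e,
      LinearMap.ker (bd k).mulVecLin = LinearMap.range (bd (k + 1)).mulVecLin) :
    letI IsForest : Finset (Fin (a (e + 2))) → Prop := fun T =>
      LinearIndependent ℚ (fun τ : T => fun σ => ((bd (e + 1) σ τ.1 : ℤ) : ℚ)) ∧
        T.card = ((bd (e + 1)).map (Int.cast : ℤ → ℚ)).rank
    letI H : Finset (Fin (a (e + 2))) → Type _ := fun T =>
      LinearMap.ker (bd e).mulVecLin ⧸
        Submodule.comap (LinearMap.ker (bd e).mulVecLin).subtype
          (Submodule.span ℤ ((fun τ => (bd (e + 1))ᵀ τ) '' ↑T))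
    letI τd : ℕ := ∑ᶠ T ∈ {T | IsForest T}, (Nat.card (Submodule.torsion ℤ (H T))) ^ 2
    (τd : ℂ) *
        (∏ i ∈ (Finset.range (e + 2)).filter (fun i => (e + 1 - i) % 2 = 1),
          pseudoDet (bd i * (bd i)ᵀ)) =
      ∏ i ∈ (Finset.range (e + 2)).filter (fun i => (e + 1 - i) % 2 = 0),
        pseudoDet (bd i * (bd i)ᵀ) := by
  classical
  choose r B C S hA hB hCS using fun k => APTC.factor (bd k)
  have hrange : ∀ k, LinearMap.range (bd k).mulVecLin = LinearMap.range (B k).mulVecLin := by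
    intro k
    apply le_antisymm
    · rintro _ ⟨x, rfl⟩
      exact ⟨C k *ᵥ x, by
        rw [Matrix.mulVecLin_apply, Matrix.mulVecLin_apply, Matrix.mulVec_mulVec, ← hA]⟩
    · rintro _ ⟨x, rfl⟩
      refine ⟨S k *ᵥ x, ?_⟩
      rw [Matrix.mulVecLin_apply, Matrix.mulVecLin_apply, Matrix.mulVec_mulVec, hA k,
        Matrix.mul_assoc, hCS, Matrix.mul_one]
  have hker : ∀ k x, bd k *ᵥ x = 0 ↔ C k *ᵥ x = 0 := by
    intro k x
    constructor
    · intro h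
      apply hB k
      rw [Matrix.mulVec_zero, Matrix.mulVec_mulVec, ← hA, h]
    · intro h
      rw [hA k, ← Matrix.mulVec_mulVec, h, Matrix.mulVec_zero]
  have hcomp : ∀ k ≤ e, (C k * (C k)ᵀ).det = ((B (k + 1))ᵀ * B (k + 1)).det := by
    intro k hk
    have hx : ∀ x, C k *ᵥ x = 0 ↔ ∃ y, B (k + 1) *ᵥ y = x := by
      intro x
      rw [← hker]
      have h1 := (hacyclic k hk).trans (hrange (k + 1))
      exact Submodule.ext_iff.mp h1 x
    refine APTC.compl_gram (B (k + 1)) (C k) (S k) (hB _) (hCS k) ?_ (fun x => (hx x).mp)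
    apply Matrix.ext_of_mulVec_single
    intro i
    rw [← Matrix.mulVec_mulVec, Matrix.zero_mulVec]
    exact (hx _).mpr ⟨_, rfl⟩
  have hCne : ∀ k, (C k * (C k)ᵀ).det ≠ 0 := by
    intro k
    have : Function.Injective ((C k)ᵀ).mulVec := by
      intro v w h
      have h := congrArg (fun z => (S k)ᵀ *ᵥ z) h
      simpa [Matrix.mulVec_mulVec, ← Matrix.transpose_mul, hCS] using h
    simpa using APTC.gram_ne_zero _ this
  have hl : ∀ k, pseudoDet (bd k * (bd k)ᵀ) =
      ((((B k)ᵀ * B k).det * (C k * (C k)ᵀ).det : ℤ) : ℂ) := by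
    intro k
    conv_lhs => rw [hA k]
    exact APTC.pseudoDet_factor _ _ (APTC.gram_ne_zero _ (hB k)) (hCne k)
  have hD0 : ((B 0)ᵀ * B 0).det = 1 := by
    rcases Nat.eq_zero_or_pos (a 1) with h1 | h1
    · have hr : IsEmpty (Fin (r 0)) := by
        refine ⟨fun i => ?_⟩
        have h2 : IsEmpty (Fin (a (0 + 1))) := by rw [zero_add, h1]; infer_instance
        have := congrFun (congrFun (hCS 0) i) i
        rw [Matrix.mul_apply] at this
        simp at this
      exact Matrix.det_isEmpty
    · have hs : Subsingleton (Fin (a 0)) := by rw [ha]; infer_instance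
      have := APTC.compl_gram (B 0) (0 : Matrix (Fin 0) (Fin (a 0)) ℤ) 0 (hB 0)
        (Subsingleton.elim _ _) (Subsingleton.elim _ _) (by
          intro x _
          have h2 : x ∈ LinearMap.range (bd 0).mulVecLin := by
            have i0 : Fin (a 0) := ⟨0, by omega⟩
            refine ⟨Pi.single (⟨0, h1⟩ : Fin (a (0 + 1))) (x i0), ?_⟩
            ext i
            rw [Subsingleton.elim i i0]
            simp [h0]
          rw [hrange] at h2
          exact h2)
      rw [← this]; exact Matrix.det_isEmpty
  have htau := APTC.tau_eq (bd e) (bd (e + 1)) (hacyclic e le_rfl) (B (e + 1)) (C (e + 1))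
    (S (e + 1)) (hA _) (hB _) (hCS _)
  have hstep := APTC.prod_step (fun k => pseudoDet (bd k * (bd k)ᵀ))
    (fun k => ((((B k)ᵀ * B k).det : ℤ) : ℂ)) e (by simp [hD0])
    (fun k hk => by simp only [hl, hcomp k hk]; push_cast; rfl) (e + 1) le_rfl
  have h1 : (Finset.range (e + 2)).filter (fun i => (e + 1 - i) % 2 = 0) =
      insert (e + 1) ((Finset.range (e + 1)).filter (fun i => (e + 1 - i) % 2 = 0)) := by
    ext i; simp only [Finset.mem_filter, Finset.mem_range, Finset.mem_insert]; omega
  have h2 : (Finset.range (e + 2)).filter (fun i => (e + 1 - i) % 2 = 1) =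
      (Finset.range (e + 1)).filter (fun i => (e + 1 - i) % 2 = 1) := by
    ext i; simp only [Finset.mem_filter, Finset.mem_range]; omega
  have htauC := congrArg (Int.cast : ℤ → ℂ) htau
  rw [Int.cast_natCast] at htauC
  rw [h1, h2, Finset.prod_insert (by simp), hstep, hl (e + 1)]
  refine (congrArg (· * _) htauC).trans ?_
  push_cast
  ring
end

section
/- Let d ≥ 2 and let ∂_0, …, ∂_d be the boundary matrices of a d-dimensional cell complex X, and suppose ker_ℝ(∂_{d−1}) = im_ℝ(∂_d) and ker_ℝ(∂_{d−2}) = im_ℝ(∂_{d−1}) (i.e., H_{d−1}(X;ℝ) = H_{d−2}(X;ℝ) = 0). Let R be a set of (d−1)-cells such that the columns of ∂_{d−1}|_R form a basis of the column space of ∂_{d−1} (a maximal spanning (d−1)-forest), and let S be the complementary set of (d−1)-cells. Introduce an indeterminate w_σ for each d-cell σ, and let L_S(X;w) be the S×S submatrix of ∂_d·W·∂_dᵀ, where W is the diagonal matrix with entries w_σ. Then, in ℤ[w]: t(ker_ℤ(∂_{d−2})/im_ℤ(∂_{d−1}|_R))² · ∑_T t(ker_ℤ(∂_{d−1})/im_ℤ(∂_d|_T))²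 ∏_{σ∈T} w_σ = t(ker_ℤ(∂_{d−2})/im_ℤ(∂_{d−1}))² · det(L_S(X;w)), the sum being over all maximal spanning d-forests T of X. -/
open Matrix MvPolynomial

set_option linter.unusedSectionVars false

namespace WCMF

lemma det_index {n : Type*} [Fintype n] [DecidableEq n] (M : Matrix n n ℤ) (hM : M.det ≠ 0) :
    (LinearMap.range M.mulVecLin).toAddSubgroup.index = M.det.natAbs := by
  have hinj : Function.Injective M.mulVecLin := by
    rw [← LinearMap.ker_eq_bot, LinearMap.ker_eq_bot']
    intro v hv
    by_contra h
    exact hM (Matrix.exists_mulVec_eq_zero_iff.1 ⟨v, h, hv⟩)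
  have h := Submodule.natAbs_det_equiv (LinearMap.range M.mulVecLin)
    (LinearEquiv.ofInjective M.mulVecLin hinj)
  have h2 : (LinearMap.range M.mulVecLin).subtype ∘ₗ
      ((LinearEquiv.ofInjective M.mulVecLin hinj : (n → ℤ) ≃ₗ[ℤ] _) : (n → ℤ) →+ _).toIntLinearMap
      = Matrix.toLin' M := by
    ext; rfl
  erw [h2, LinearMap.det_toLin'] at h
  exact h.symm

/-- Cauchy–Binet, summed over column sets. -/
lemma cauchy_binet {n m A : Type*} [Fintype n] [DecidableEq n] [Fintype m] [DecidableEq m]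
    [CommRing A] (M : Matrix n m A) (N : Matrix m n A) (F : Finset m → A)
    (hF : ∀ (T : Finset m) (g : n ≃ T),
      F T = (M.submatrix id (fun s => (g s).1)).det * (N.submatrix (fun s => (g s).1) id).det) :
    (M * N).det = ∑ T ∈ Finset.powersetCard (Fintype.card n) Finset.univ, F T := by
  classical
  have h1 : (M * N).det = ∑ p : n → m, (M.submatrix id p).det * ∏ i, N (p i) i := by
    simp only [det_apply', mul_apply, Finset.prod_univ_sum, Finset.mul_sum, Fintype.piFinset_univ,
      Finset.sum_mul, submatrix_apply, id]
    rw [Finset.sum_comm]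
    refine Finset.sum_congr rfl fun p _ => Finset.sum_congr rfl fun σ _ => ?_
    rw [Finset.prod_mul_distrib, mul_assoc]
  have h2 : (M * N).det = ∑ p : n → m with Function.Injective p,
      (M.submatrix id p).det * ∏ i, N (p i) i := by
    rw [h1]
    refine (Finset.sum_subset (Finset.filter_subset _ _) fun p _ hp => ?_).symm
    have hp' : ¬ Function.Injective p := by simpa using hp
    simp only [Function.Injective, not_forall] at hp'
    obtain ⟨i, j, hij, hne⟩ := hp'
    rw [Matrix.det_zero_of_column_eq hne (by intro k; simp [hij]), zero_mul]
  rw [h2, ← Finset.sum_fiberwise_of_maps_to (g := fun p : n → m => Finset.univ.image p)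
    (t := Finset.powersetCard (Fintype.card n) Finset.univ)]
  · refine Finset.sum_congr rfl fun T hT => ?_
    have hc : Fintype.card n = Fintype.card T := by
      rw [Finset.mem_powersetCard] at hT; simp [hT.2]
    let g : n ≃ T := Fintype.equivOfCardEq hc
    rw [hF T g]
    have : (M.submatrix id (fun s => (g s).1)).det * (N.submatrix (fun s => (g s).1) id).det
      = ∑ τ : Equiv.Perm n, (M.submatrix id (fun s => (g (τ s)).1)).det *
          ∏ i, N (g (τ i)).1 i := by
      rw [det_apply' (N.submatrix _ _), Finset.mul_sum]
      refine Finset.sum_congr rfl fun τ _ => ?_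
      have := Matrix.det_permute' τ (M.submatrix id (fun s => (g s).1))
      rw [Matrix.submatrix_submatrix] at this
      have e : (M.submatrix id fun s => (g (τ s)).1) =
        M.submatrix (id ∘ id) ((fun s => (g s).1) ∘ τ) := rfl
      rw [e, this]
      simp only [submatrix_apply, id]
      ring
    rw [this]
    symm
    refine Finset.sum_bij (fun τ _ => fun s => (g (τ s)).1) ?_ ?_ ?_ ?_
    · intro τ _
      simp only [Finset.mem_filter, Finset.mem_univ, true_and]
      refine ⟨fun x y h => τ.injective (g.injective (Subtype.ext h)), ?_⟩
      ext t
      simp only [Finset.mem_image, Finset.mem_univ, true_and]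
      constructor
      · rintro ⟨s, rfl⟩; exact (g (τ s)).2
      · intro ht; exact ⟨τ.symm (g.symm ⟨t, ht⟩), by simp⟩
    · intro τ _ τ' _ h
      ext s
      exact g.injective (Subtype.ext (congrFun h s))
    · intro p hp
      simp only [Finset.mem_filter, Finset.mem_univ, true_and] at hp
      obtain ⟨hp, hpT⟩ := hp
      have hm : ∀ s, p s ∈ T := fun s => by rw [← hpT]; exact Finset.mem_image_of_mem _ (Finset.mem_univ _)
      have hi : Function.Injective (fun s => g.symm ⟨p s, hm s⟩) := by
        intro x y h
        exact hp (congrArg Subtype.val (g.symm.injective h))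
      refine ⟨Equiv.ofBijective _ (Finite.injective_iff_bijective.1 hi), Finset.mem_univ _, ?_⟩
      ext s
      simp
    · intro τ _; rfl
  · intro p hp
    have hp : Function.Injective p := by simpa using hp
    rw [Finset.mem_powersetCard]
    refine ⟨Finset.subset_univ _, ?_⟩
    rw [Finset.card_image_of_injective _ hp, Finset.card_univ]

/-- saturation -/
def sat {V : Type*} [AddCommGroup V] (N : Submodule ℤ V) : Submodule ℤ V :=
  (Submodule.torsion ℤ (V ⧸ N)).comap N.mkQ

lemma mem_sat {V : Type*} [AddCommGroup V] (N : Submodule ℤ V) (x : V) :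
    x ∈ sat N ↔ ∃ k : ℤ, k ≠ 0 ∧ k • x ∈ N := by
  simp only [sat, Submodule.mem_comap, Submodule.mem_torsion_iff]
  constructor
  · rintro ⟨a, ha⟩
    refine ⟨a, nonZeroDivisors.ne_zero a.2, ?_⟩
    rw [← Submodule.Quotient.mk_eq_zero, Submodule.Quotient.mk_smul]
    exact ha
  · rintro ⟨k, hk, h⟩
    refine ⟨⟨k, mem_nonZeroDivisors_of_ne_zero hk⟩, ?_⟩
    rw [← Submodule.Quotient.mk_eq_zero, Submodule.Quotient.mk_smul] at h
    exact h

lemma le_sat {V : Type*} [AddCommGroup V] (N : Submodule ℤ V) : N ≤ sat N := fun x hx =>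
  (mem_sat N x).2 ⟨1, one_ne_zero, by simpa using hx⟩

lemma card_torsion {V : Type*} [AddCommGroup V] (N : Submodule ℤ V) :
    Nat.card (Submodule.torsion ℤ (V ⧸ N)) =
      N.toAddSubgroup.relIndex (sat N).toAddSubgroup := by
  have h := AddSubgroup.relIndex_comap (⊥ : AddSubgroup (V ⧸ N)) N.mkQ.toAddMonoidHom
    (sat N).toAddSubgroup
  have h1 : AddSubgroup.comap N.mkQ.toAddMonoidHom ⊥ = N.toAddSubgroup := by
    ext x; simp
  have h2 : AddSubgroup.map N.mkQ.toAddMonoidHom (sat N).toAddSubgroup =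
      (Submodule.torsion ℤ (V ⧸ N)).toAddSubgroup := by
    have : (sat N).map N.mkQ = Submodule.torsion ℤ (V ⧸ N) :=
      Submodule.map_comap_eq_of_surjective N.mkQ_surjective _
    rw [← this]
    rfl
  rw [h1, h2, AddSubgroup.relIndex_bot_left] at h
  exact h.symm

/-- sat does not change under finite index -/
lemma sat_eq {V : Type*} [AddCommGroup V] (N N' : Submodule ℤ V) (hle : N ≤ N')
    (h : N.toAddSubgroup.relIndex N'.toAddSubgroup ≠ 0) : sat N = sat N' := by
  apply le_antisymm
  · intro x hx
    rw [mem_sat] at *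
    obtain ⟨k, hk, h⟩ := hx
    exact ⟨k, hk, hle h⟩
  · intro x hx
    rw [mem_sat] at *
    obtain ⟨k, hk, hx⟩ := hx
    obtain ⟨n, hn, -, hmem⟩ := AddSubgroup.exists_nsmul_mem_of_relIndex_ne_zero h
      (a := k • x) hx
    refine ⟨(n : ℤ) * k, mul_ne_zero (by exact_mod_cast hn.ne') hk, ?_⟩
    rw [mul_smul, natCast_zsmul]
    exact hmem.1

lemma torsion_mul {V : Type*} [AddCommGroup V] (N N' : Submodule ℤ V) (hle : N ≤ N')
    (h : N.toAddSubgroup.relIndex N'.toAddSubgroup ≠ 0) :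
    Nat.card (Submodule.torsion ℤ (V ⧸ N)) =
      N.toAddSubgroup.relIndex N'.toAddSubgroup * Nat.card (Submodule.torsion ℤ (V ⧸ N')) := by
  rw [card_torsion, card_torsion, sat_eq N N' hle h]
  have hsat := le_sat N'
  symm
  exact AddSubgroup.relIndex_mul_relIndex _ _ _ hle hsat

/-- The version with comaps to a submodule -/
lemma torsion_mul' {V : Type*} [AddCommGroup V] (M N N' : Submodule ℤ V) (hle : N ≤ N')
    (hle' : N' ≤ M)
    (h : N.toAddSubgroup.relIndex N'.toAddSubgroup ≠ 0) :
    Nat.card (Submodule.torsion ℤ (M ⧸ N.comap M.subtype)) =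
      N.toAddSubgroup.relIndex N'.toAddSubgroup *
        Nat.card (Submodule.torsion ℤ (M ⧸ N'.comap M.subtype)) := by
  have e : (N.comap M.subtype).toAddSubgroup.relIndex (N'.comap M.subtype).toAddSubgroup =
      N.toAddSubgroup.relIndex N'.toAddSubgroup := by
    have := AddSubgroup.relIndex_comap N.toAddSubgroup M.subtype.toAddMonoidHom
      (N'.comap M.subtype).toAddSubgroup
    have h2 : AddSubgroup.map M.subtype.toAddMonoidHom (N'.comap M.subtype).toAddSubgroup
        = N'.toAddSubgroup := by
      have : (N'.comap M.subtype).map M.subtype = N' := by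
        rw [Submodule.map_comap_subtype, inf_eq_right.2 hle']
      conv_rhs => rw [← this]
      rfl
    rw [h2] at this
    exact this
  rw [← e] at h ⊢
  exact torsion_mul _ _ (Submodule.comap_mono hle) h

lemma torsion_self {V : Type*} [AddCommGroup V] (M : Submodule ℤ V) :
    Nat.card (Submodule.torsion ℤ (M ⧸ M.comap M.subtype)) = 1 := by
  rw [Submodule.comap_subtype_self, Nat.card_eq_one_iff_unique]
  exact ⟨inferInstance, inferInstance⟩

lemma rank_le_of {K L m n : Type*} [Field K] [Field L] [Fintype m] [Fintype n]
    (A : Matrix m n K) (B : Matrix m n L)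
    (h : ∀ (k : ℕ) (s : Fin k → n), LinearIndependent K (fun i => Aᵀ (s i)) →
      LinearIndependent L (fun i => Bᵀ (s i))) : A.rank ≤ B.rank := by
  classical
  obtain ⟨κ, s, hs, hspan, hli⟩ := exists_linearIndependent' K Aᵀ
  have : Finite κ := Finite.of_injective s hs
  have := Fintype.ofFinite κ
  have hA : A.rank = Fintype.card κ := by
    rw [rank_eq_finrank_span_cols]
    have := finrank_span_eq_card hli
    rw [hspan] at this
    exact this
  let g := (Fintype.equivFin κ).symm
  have h2 := h _ (fun i => s (g i)) (hli.comp g g.injective)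
  have h3 := finrank_span_eq_card h2
  rw [hA, rank_eq_finrank_span_cols]
  rw [Fintype.card_fin] at h3
  rw [← h3]
  apply Submodule.finrank_mono
  apply Submodule.span_mono
  rintro _ ⟨i, rfl⟩
  exact ⟨_, rfl⟩

lemma li_iff {K m κ : Type*} [Field K] [CharZero K] [Fintype m] (v : κ → m → ℤ) :
    LinearIndependent K (fun i j => ((v i j : ℤ) : K)) ↔ LinearIndependent ℤ v := by
  have : FaithfulSMul ℤ K := by
    rw [faithfulSMul_iff_algebraMap_injective]; exact Int.cast_injective
  exact linearIndependent_algebraMap_comp_iff (R := ℤ) (S := K) (v := v)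

lemma rank_eq {m n : Type*} [Fintype m] [Fintype n] (A : Matrix m n ℤ) :
    (A.map (Int.cast : ℤ → ℚ)).rank = (A.map (Int.cast : ℤ → ℝ)).rank := by
  apply le_antisymm <;> apply rank_le_of <;> intro k s h
  · exact (li_iff (K := ℝ) (fun i => Aᵀ (s i))).2 ((li_iff (K := ℚ) (fun i => Aᵀ (s i))).1 h)
  · exact (li_iff (K := ℚ) (fun i => Aᵀ (s i))).2 ((li_iff (K := ℝ) (fun i => Aᵀ (s i))).1 h)


section core

variable {l m n : Type*} [Fintype l] [Fintype m] [Fintype n] [DecidableEq m] [DecidableEq n]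
  (B : Matrix l m ℤ) (D : Matrix m n ℤ) (R : Finset m)

/-- projection to the complement of `R` -/
def proj : (m → ℤ) →ₗ[ℤ] ({i : m // i ∉ R} → ℤ) := LinearMap.funLeft ℤ ℤ Subtype.val

lemma proj_apply (x : m → ℤ) (i : {i : m // i ∉ R}) : proj R x i = x i.1 := rfl

lemma proj_surj : Function.Surjective (proj R) :=
  LinearMap.funLeft_surjective_of_injective ℤ ℤ _ Subtype.val_injective

lemma span_cols_eq : Submodule.span ℤ ((fun ρ => Bᵀ ρ) '' (R : Set m)) =
    (LinearMap.ker (proj R)).map B.mulVecLin := by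
  apply le_antisymm
  · rw [Submodule.span_le]
    rintro _ ⟨ρ, hρ, rfl⟩
    refine ⟨Pi.single ρ 1, ?_, ?_⟩
    · change proj R _ = 0
      ext i
      rw [proj_apply]
      have : i.1 ≠ ρ := fun h => i.2 (h ▸ hρ)
      simp [this]
    · simp [Matrix.col_def]
  · rintro _ ⟨x, hx, rfl⟩
    have hx : proj R x = 0 := hx
    rw [Matrix.mulVecLin_apply, Matrix.mulVec_eq_sum]
    refine Submodule.sum_mem _ fun i _ => ?_
    by_cases hi : i ∈ R
    · have : Bᵀ i ∈ Submodule.span ℤ ((fun ρ => Bᵀ ρ) '' (R : Set m)) :=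
        Submodule.subset_span ⟨i, hi, rfl⟩
      simpa using Submodule.smul_mem _ (x i) this
    · have : x i = 0 := congrFun hx ⟨i, hi⟩
      simp [this]

lemma span_cols_le : Submodule.span ℤ ((fun ρ => Bᵀ ρ) '' (R : Set m)) ≤
    LinearMap.range B.mulVecLin := by
  rw [span_cols_eq]
  exact LinearMap.map_le_range

lemma index_proj_ker :
    ((LinearMap.ker B.mulVecLin).map (proj R)).toAddSubgroup.index =
      (Submodule.span ℤ ((fun ρ => Bᵀ ρ) '' (R : Set m))).toAddSubgroup.relIndex
        (LinearMap.range B.mulVecLin).toAddSubgroup := by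
  rw [span_cols_eq]
  have h1 := AddSubgroup.index_comap_of_surjective
    ((LinearMap.ker B.mulVecLin).map (proj R)).toAddSubgroup
    (f := (proj R).toAddMonoidHom) (proj_surj R)
  have h2 := AddSubgroup.index_comap
    ((LinearMap.ker (proj R)).map B.mulVecLin).toAddSubgroup B.mulVecLin.toAddMonoidHom
  rw [← h1]
  refine Eq.trans ?_ h2
  have e : ((LinearMap.ker B.mulVecLin).map (proj R)).comap (proj R) =
      ((LinearMap.ker (proj R)).map B.mulVecLin).comap B.mulVecLin := by
    rw [Submodule.comap_map_eq, Submodule.comap_map_eq, sup_comm]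
  congr 1
  ext x
  exact SetLike.ext_iff.1 e x

lemma proj_inj (hR : LinearIndependent ℤ (fun ρ : R => Bᵀ ρ.1)) (x : m → ℤ)
    (hx : x ∈ LinearMap.ker B.mulVecLin) (hp : proj R x = 0) : x = 0 := by
  rw [Fintype.linearIndependent_iff] at hR
  have h0 : ∀ i, i ∉ R → x i = 0 := fun i hi => congrFun hp ⟨i, hi⟩
  have hx : B.mulVec x = 0 := hx
  rw [Matrix.mulVec_eq_sum] at hx
  have := hR (fun ρ => x ρ.1) (by
    rw [Finset.sum_coe_sort R (fun i => x i • Bᵀ i)]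
    rw [Finset.sum_subset (Finset.subset_univ R) (fun i _ hi => by rw [h0 i hi, zero_smul])]
    simpa using hx)
  ext i
  by_cases hi : i ∈ R
  · exact this ⟨i, hi⟩
  · exact h0 i hi

variable {D R} in
/-- range of the square matrix -/
lemma range_sq (T : Finset n) (g : {i : m // i ∉ R} ≃ T) :
    LinearMap.range (D.submatrix (Subtype.val : {i : m // i ∉ R} → m)
      (fun s => (g s).1)).mulVecLin =
    (Submodule.span ℤ ((fun τ => Dᵀ τ) '' (T : Set n))).map (proj R) := by
  rw [Matrix.range_mulVecLin, Submodule.map_span, ← Set.image_comp]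
  congr 1
  ext x
  constructor
  · rintro ⟨s, rfl⟩
    exact ⟨(g s).1, (g s).2, rfl⟩
  · rintro ⟨t, ht, rfl⟩
    refine ⟨g.symm ⟨t, ht⟩, ?_⟩
    ext i
    simp [proj_apply]

variable {B D R} in
lemma cols_le_ker (hBD : B * D = 0) (T : Finset n) :
    Submodule.span ℤ ((fun τ => Dᵀ τ) '' (T : Set n)) ≤ LinearMap.ker B.mulVecLin := by
  refine (span_cols_le D T).trans ?_
  rintro _ ⟨x, rfl⟩
  simp [hBD]

variable {B D R} in
lemma det_ne_zero_iff (hBD : B * D = 0) (hR : LinearIndependent ℤ (fun ρ : R => Bᵀ ρ.1))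
    (T : Finset n) (g : {i : m // i ∉ R} ≃ T) :
    (D.submatrix (Subtype.val : {i : m // i ∉ R} → m) (fun s => (g s).1)).det ≠ 0 ↔
      LinearIndependent ℤ (fun τ : T => Dᵀ τ.1) := by
  rw [← linearIndependent_equiv g, Fintype.linearIndependent_iff, not_iff_comm,
    ← Matrix.exists_mulVec_eq_zero_iff]
  have key : ∀ v : {i : m // i ∉ R} → ℤ,
      (D.submatrix (Subtype.val : {i : m // i ∉ R} → m) (fun s => (g s).1)).mulVec v =
      proj R (∑ i, v i • Dᵀ (g i).1) := by
    intro v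
    ext i
    simp [proj_apply, Matrix.mulVec, dotProduct, mul_comm]
  have hker : ∀ v : {i : m // i ∉ R} → ℤ,
      (∑ i, v i • Dᵀ (g i).1) ∈ LinearMap.ker B.mulVecLin := fun v =>
    cols_le_ker hBD T (Submodule.sum_mem _ fun i _ => Submodule.smul_mem _ _
      (Submodule.subset_span ⟨_, (g i).2, rfl⟩))
  constructor
  · intro h
    simp only [not_forall] at h
    obtain ⟨v, hv, i, hi⟩ := h
    refine ⟨v, fun h => hi (congrFun h i), ?_⟩
    rw [key]
    have hv : ∑ i, v i • Dᵀ (g i).1 = 0 := hv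
    rw [hv, map_zero]
  · rintro ⟨v, hv, h0⟩ h
    rw [key] at h0
    exact hv (funext (h v (proj_inj B R hR _ (hker v) h0)))

variable {B D R} in
lemma det_eq (hBD : B * D = 0) (hR : LinearIndependent ℤ (fun ρ : R => Bᵀ ρ.1))
    (T : Finset n) (g : {i : m // i ∉ R} ≃ T)
    (hd : (D.submatrix (Subtype.val : {i : m // i ∉ R} → m) (fun s => (g s).1)).det ≠ 0) :
    (D.submatrix (Subtype.val : {i : m // i ∉ R} → m) (fun s => (g s).1)).det.natAbs =
    Nat.card (Submodule.torsion ℤ (LinearMap.ker B.mulVecLin ⧸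
          Submodule.comap (LinearMap.ker B.mulVecLin).subtype
            (Submodule.span ℤ ((fun τ => Dᵀ τ) '' (T : Set n))))) *
    (Submodule.span ℤ ((fun ρ => Bᵀ ρ) '' (R : Set m))).toAddSubgroup.relIndex
        (LinearMap.range B.mulVecLin).toAddSubgroup := by
  set K := LinearMap.ker B.mulVecLin with hK
  set Z := Submodule.span ℤ ((fun τ => Dᵀ τ) '' (T : Set n)) with hZ
  have hle : Z ≤ K := cols_le_ker hBD T
  have h1 := det_index _ hd
  rw [range_sq] at h1
  have h2 := AddSubgroup.relIndex_mul_index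
    (H := (Z.map (proj R)).toAddSubgroup) (K := (K.map (proj R)).toAddSubgroup)
    (Submodule.map_mono hle)
  have h3 : (Z.map (proj R)).toAddSubgroup.relIndex (K.map (proj R)).toAddSubgroup =
      Z.toAddSubgroup.relIndex K.toAddSubgroup := by
    have h4 := AddSubgroup.relIndex_comap (Z.map (proj R)).toAddSubgroup
      (proj R).toAddMonoidHom K.toAddSubgroup
    refine Eq.trans h4.symm ?_
    rw [← AddSubgroup.inf_relIndex_right]
    congr 1
    ext x
    constructor
    · rintro ⟨⟨z, hz, hzx⟩, hx⟩
      have : z - x = 0 := by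
        apply proj_inj B R hR _ (K.sub_mem (hle hz) hx)
        rw [map_sub, sub_eq_zero]
        exact hzx
      rw [sub_eq_zero] at this
      exact this ▸ hz
    · intro hx
      exact ⟨⟨x, hx, rfl⟩, hle hx⟩
  rw [h3, h1, index_proj_ker] at h2
  rw [← h2]
  have hne : Z.toAddSubgroup.relIndex K.toAddSubgroup ≠ 0 := by
    intro h
    rw [h, zero_mul] at h2
    exact hd (Int.natAbs_eq_zero.1 h2.symm)
  rw [torsion_mul' K Z K hle le_rfl hne, torsion_self, mul_one]

variable {B D R} in
lemma rank_D (hex : LinearMap.ker (B.map (Int.cast : ℤ → ℝ)).mulVecLin =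
      LinearMap.range (D.map (Int.cast : ℤ → ℝ)).mulVecLin)
    (hR1 : LinearIndependent ℚ (fun ρ : R => fun σ => ((B σ ρ.1 : ℤ) : ℚ)))
    (hR2 : Submodule.span ℚ (Set.range (fun ρ : R => fun σ => ((B σ ρ.1 : ℤ) : ℚ))) =
      Submodule.span ℚ (Set.range (fun ρ : m => fun σ => ((B σ ρ : ℤ) : ℚ)))) :
    (D.map (Int.cast : ℤ → ℚ)).rank = Fintype.card {i : m // i ∉ R} := by
  have h1 : (B.map (Int.cast : ℤ → ℚ)).rank = R.card := by
    rw [rank_eq_finrank_span_cols]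
    have := finrank_span_eq_card hR1
    rw [hR2, Fintype.card_coe] at this
    exact this
  have h2 := LinearMap.finrank_range_add_finrank_ker (B.map (Int.cast : ℤ → ℝ)).mulVecLin
  rw [hex] at h2
  change (B.map (Int.cast : ℤ → ℝ)).rank + (D.map (Int.cast : ℤ → ℝ)).rank = _ at h2
  rw [← rank_eq, ← rank_eq, h1] at h2
  have h3 : Fintype.card {i : m // i ∉ R} = Fintype.card m - R.card := by
    rw [Fintype.card_subtype_compl]; simp
  simp at h2
  omega

variable {B D R} in
lemma core_F (hBD : B * D = 0) (hR : LinearIndependent ℤ (fun ρ : R => Bᵀ ρ.1))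
    (T : Finset n) (g : {i : m // i ∉ R} ≃ T) (t q : ℕ)
    (hq : q = (Submodule.span ℤ ((fun ρ => Bᵀ ρ) '' (R : Set m))).toAddSubgroup.relIndex
        (LinearMap.range B.mulVecLin).toAddSubgroup)
    (ht : t = Nat.card (Submodule.torsion ℤ (LinearMap.ker B.mulVecLin ⧸
          Submodule.comap (LinearMap.ker B.mulVecLin).subtype
            (Submodule.span ℤ ((fun τ => Dᵀ τ) '' (T : Set n))))))
    (M : Matrix {i : m // i ∉ R} n (MvPolynomial n ℤ))
    (N : Matrix n {i : m // i ∉ R} (MvPolynomial n ℤ))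
    (hM : M = fun i σ => ((D i.1 σ : ℤ) : MvPolynomial n ℤ) * X σ)
    (hN : N = fun σ i => ((D i.1 σ : ℤ) : MvPolynomial n ℤ))
    [Decidable (LinearIndependent ℤ (fun τ : T => Dᵀ τ.1))] :
    (if LinearIndependent ℤ (fun τ : T => Dᵀ τ.1) then
      (((t * q) ^ 2 : ℕ) : MvPolynomial n ℤ) * ∏ σ ∈ T, X σ else 0) =
    (M.submatrix id (fun s => (g s).1)).det * (N.submatrix (fun s => (g s).1) id).det := by
  set A := D.submatrix (Subtype.val : {i : m // i ∉ R} → m) (fun s => (g s).1) with hA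
  have e1 : M.submatrix id (fun s => (g s).1) =
      (Int.castRingHom (MvPolynomial n ℤ)).mapMatrix A *
        Matrix.diagonal (fun s => X (g s).1) := by
    ext1 i s
    rw [Matrix.mul_diagonal]
    simp [hM, hA]
    rfl
  have e2 : N.submatrix (fun s => (g s).1) id =
      ((Int.castRingHom (MvPolynomial n ℤ)).mapMatrix A)ᵀ := by
    ext1 i s
    simp [hN, hA]
    rfl
  have e3 : ∏ s, (X (g s).1 : MvPolynomial n ℤ) = ∏ σ ∈ T, X σ := by
    rw [Equiv.prod_comp g (fun τ : T => (X τ.1 : MvPolynomial n ℤ))]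
    exact Finset.prod_coe_sort T (fun τ => (X τ : MvPolynomial n ℤ))
  rw [e1, e2, Matrix.det_transpose, Matrix.det_mul, Matrix.det_diagonal, e3,
    ← RingHom.map_det]
  have hiff := det_ne_zero_iff hBD hR T g
  rw [← hA] at hiff
  split_ifs with h
  · have hd := hiff.2 h
    have := det_eq hBD hR T g hd
    rw [← hA, ← ht, ← hq] at this
    rw [← this]
    have h5 : (((A.det.natAbs ^ 2 : ℕ) : ℤ) : MvPolynomial n ℤ) =
        ((A.det ^ 2 : ℤ) : MvPolynomial n ℤ) := by
      rw [Nat.cast_pow, Int.natAbs_sq]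
    rw [Int.cast_natCast] at h5
    rw [h5, Int.cast_pow, eq_intCast]
    ring
  · have : A.det = 0 := by
      by_contra h'
      exact h (hiff.1 h')
    simp [this]

end core

end WCMF



/-- **The weighted cellular matrix-forest theorem** (reduced-Laplacian form).
Here `d = e + 2 ≥ 2`; `a (k+1)` is the number of `k`-cells (and `a 0 = 1`), `bd k` is the
`k`-th boundary matrix (`bd 0` the all-ones row), `H_{d-1}(X;ℝ) = H_{d-2}(X;ℝ) = 0`,
`R` is a maximal spanning `(d-1)`-forest (its columns of `∂_{d-1}` are a basis of the
column space of `∂_{d-1}`) and `S` its complement.  Then in `ℤ[w_σ : σ a d-cell]`: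
`t(ker ∂_{d-2}/im ∂_{d-1}|_R)² · ∑_T t(ker ∂_{d-1}/im ∂_d|_T)² ∏_{σ∈T} w_σ
  = t(ker ∂_{d-2}/im ∂_{d-1})² · det L_S(X; w)`. -/
theorem weighted_cellular_matrix_forest (e : ℕ) (a : ℕ → ℕ) (ha : a 0 = 1)
    (bd : (k : ℕ) → Matrix (Fin (a k)) (Fin (a (k + 1))) ℤ)
    (h0 : ∀ i j, bd 0 i j = 1)
    (hchain : ∀ k ≤ e + 1, bd k * bd (k + 1) = 0)
    (hd1 : LinearMap.ker ((bd (e + 1)).map (Int.cast : ℤ → ℝ)).mulVecLin =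
      LinearMap.range ((bd (e + 2)).map (Int.cast : ℤ → ℝ)).mulVecLin)
    (hd2 : LinearMap.ker ((bd e).map (Int.cast : ℤ → ℝ)).mulVecLin =
      LinearMap.range ((bd (e + 1)).map (Int.cast : ℤ → ℝ)).mulVecLin)
    (R : Finset (Fin (a (e + 2))))
    (hR1 : LinearIndependent ℚ (fun ρ : R => fun σ => ((bd (e + 1) σ ρ.1 : ℤ) : ℚ)))
    (hR2 : Submodule.span ℚ
        (Set.range (fun ρ : R => fun σ => ((bd (e + 1) σ ρ.1 : ℤ) : ℚ))) =
      Submodule.span ℚ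
        (Set.range (fun ρ : Fin (a (e + 2)) => fun σ => ((bd (e + 1) σ ρ : ℤ) : ℚ)))) :
    letI P := MvPolynomial (Fin (a (e + 3))) ℤ
    -- the S×S reduced weighted Laplacian, S = complement of R
    letI LS : Matrix {i : Fin (a (e + 2)) // i ∉ R} {i : Fin (a (e + 2)) // i ∉ R} P :=
      fun i j => ∑ σ : Fin (a (e + 3)),
        ((bd (e + 2) i.1 σ : ℤ) : P) * X σ * ((bd (e + 2) j.1 σ : ℤ) : P)
    letI IsForest : Finset (Fin (a (e + 3))) → Prop := fun T =>
      LinearIndependent ℚ (fun τ : T => fun σ => ((bd (e + 2) σ τ.1 : ℤ) : ℚ)) ∧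
        T.card = ((bd (e + 2)).map (Int.cast : ℤ → ℚ)).rank
    -- t(ker ∂_{d-1} / im ∂_d|_T)
    letI tT : Finset (Fin (a (e + 3))) → ℕ := fun T =>
      Nat.card (Submodule.torsion ℤ
        (LinearMap.ker (bd (e + 1)).mulVecLin ⧸
          Submodule.comap (LinearMap.ker (bd (e + 1)).mulVecLin).subtype
            (Submodule.span ℤ ((fun τ => (bd (e + 2))ᵀ τ) '' ↑T))))
    -- t(ker ∂_{d-2} / im ∂_{d-1}|_R)
    letI tR : ℕ :=
      Nat.card (Submodule.torsion ℤ
        (LinearMap.ker (bd e).mulVecLin ⧸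
          Submodule.comap (LinearMap.ker (bd e).mulVecLin).subtype
            (Submodule.span ℤ ((fun ρ => (bd (e + 1))ᵀ ρ) '' ↑R))))
    -- t(ker ∂_{d-2} / im ∂_{d-1})
    letI tX : ℕ :=
      Nat.card (Submodule.torsion ℤ
        (LinearMap.ker (bd e).mulVecLin ⧸
          Submodule.comap (LinearMap.ker (bd e).mulVecLin).subtype
            (LinearMap.range (bd (e + 1)).mulVecLin)))
    ((tR ^ 2 : ℕ) : P) *
        (∑ᶠ T ∈ {T | IsForest T}, ((tT T ^ 2 : ℕ) : P) * ∏ σ ∈ T, X σ) =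
      ((tX ^ 2 : ℕ) : P) * LS.det := by
  classical
  let P := MvPolynomial (Fin (a (e + 3))) ℤ
  let LS : Matrix {i : Fin (a (e + 2)) // i ∉ R} {i : Fin (a (e + 2)) // i ∉ R} P :=
      fun i j => ∑ σ : Fin (a (e + 3)),
        ((bd (e + 2) i.1 σ : ℤ) : P) * X σ * ((bd (e + 2) j.1 σ : ℤ) : P)
  let IsForest : Finset (Fin (a (e + 3))) → Prop := fun T =>
      LinearIndependent ℚ (fun τ : T => fun σ => ((bd (e + 2) σ τ.1 : ℤ) : ℚ)) ∧
        T.card = ((bd (e + 2)).map (Int.cast : ℤ → ℚ)).rank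
  let tT : Finset (Fin (a (e + 3))) → ℕ := fun T =>
      Nat.card (Submodule.torsion ℤ
        (LinearMap.ker (bd (e + 1)).mulVecLin ⧸
          Submodule.comap (LinearMap.ker (bd (e + 1)).mulVecLin).subtype
            (Submodule.span ℤ ((fun τ => (bd (e + 2))ᵀ τ) '' ↑T))))
  let tR : ℕ :=
      Nat.card (Submodule.torsion ℤ
        (LinearMap.ker (bd e).mulVecLin ⧸
          Submodule.comap (LinearMap.ker (bd e).mulVecLin).subtype
            (Submodule.span ℤ ((fun ρ => (bd (e + 1))ᵀ ρ) '' ↑R))))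
  let tX : ℕ :=
      Nat.card (Submodule.torsion ℤ
        (LinearMap.ker (bd e).mulVecLin ⧸
          Submodule.comap (LinearMap.ker (bd e).mulVecLin).subtype
            (LinearMap.range (bd (e + 1)).mulVecLin)))
  change ((tR ^ 2 : ℕ) : P) *
        (∑ᶠ T ∈ {T | IsForest T}, ((tT T ^ 2 : ℕ) : P) * ∏ σ ∈ T, X σ) =
      ((tX ^ 2 : ℕ) : P) * LS.det
  have hBD : bd (e + 1) * bd (e + 2) = 0 := hchain (e + 1) le_rfl
  have hRz : LinearIndependent ℤ (fun ρ : R => (bd (e + 1))ᵀ ρ.1) :=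
    (WCMF.li_iff (K := ℚ) (fun ρ : R => (bd (e + 1))ᵀ ρ.1)).1 hR1
  have hrank := WCMF.rank_D hd1 hR1 hR2
  set q := (Submodule.span ℤ ((fun ρ => (bd (e + 1))ᵀ ρ) '' (R : Set _))).toAddSubgroup.relIndex
        (LinearMap.range (bd (e + 1)).mulVecLin).toAddSubgroup with hq
  have hle : LinearMap.range (bd (e + 1)).mulVecLin ≤ LinearMap.ker (bd e).mulVecLin := by
    rintro _ ⟨x, rfl⟩
    simp [hchain e (by omega)]
  have htR : q ≠ 0 → tR = q * tX := fun h =>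
    WCMF.torsion_mul' _ _ _ (WCMF.span_cols_le (bd (e + 1)) R) hle h
  let F : Finset (Fin (a (e + 3))) → P := fun T =>
    if LinearIndependent ℤ (fun τ : T => (bd (e + 2))ᵀ τ.1) then
      (((tT T * q) ^ 2 : ℕ) : P) * ∏ σ ∈ T, X σ else 0
  have hLS : LS.det = ∑ T ∈ Finset.powersetCard (Fintype.card {i // i ∉ R}) Finset.univ, F T := by
    have := WCMF.cauchy_binet
      (fun (i : {i // i ∉ R}) σ => ((bd (e + 2) i.1 σ : ℤ) : P) * X σ)
      (fun σ (i : {i // i ∉ R}) => ((bd (e + 2) i.1 σ : ℤ) : P)) F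
      (fun T g => WCMF.core_F hBD hRz T g (tT T) q hq rfl _ _ rfl rfl)
    rw [← this]
    rfl
  have hset : {T | IsForest T} = (((Finset.powersetCard (Fintype.card {i // i ∉ R})
      (Finset.univ : Finset (Fin (a (e + 3))))).filter
        (fun T : Finset (Fin (a (e + 3))) => LinearIndependent ℤ (fun τ : T => (bd (e + 2))ᵀ τ.1)) :
        Finset (Finset (Fin (a (e + 3))))) : Set (Finset (Fin (a (e + 3))))) := by
    ext T
    simp only [Set.mem_ofPred_eq, Finset.coe_filter, Finset.mem_powersetCard, Finset.subset_univ,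
      true_and, IsForest]
    rw [hrank, and_comm, ← WCMF.li_iff (K := ℚ) (fun τ : T => (bd (e + 2))ᵀ τ.1)]
    rfl
  rw [hset, finsum_mem_coe_finset, hLS, Finset.sum_filter, Finset.mul_sum, Finset.mul_sum]
  refine Finset.sum_congr rfl fun T hT => ?_
  simp only [F]
  split_ifs with h
  · have hc : Fintype.card {i // i ∉ R} = Fintype.card T := by
      rw [Finset.mem_powersetCard] at hT; simpa using hT.2.symm
    have hd := (WCMF.det_ne_zero_iff hBD hRz T (Fintype.equivOfCardEq hc)).2 h
    have hdq := WCMF.det_eq hBD hRz T (Fintype.equivOfCardEq hc) hd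
    have hq0 : q ≠ 0 := by
      intro h0
      rw [← hq, h0, mul_zero] at hdq
      exact hd (Int.natAbs_eq_zero.1 hdq)
    rw [htR hq0]
    push_cast
    ring
  · simp
end

section
/- Let d ≥ 2 and let ∂_0, …, ∂_d be the boundary matrices of a d-dimensional cell complex X, and suppose ker_ℝ(∂_{d−1}) = im_ℝ(∂_d) and ker_ℝ(∂_{d−2}) = im_ℝ(∂_{d−1}) (i.e., H_{d−1}(X;ℝ) = H_{d−2}(X;ℝ) = 0). Then τ_{d−1}(X) · τ_d(X) = t(ker_ℤ(∂_{d−2})/im_ℤ(∂_{d−1}))² · λ(∂_d ∂_dᵀ), where λ denotes the pseudodeterminant of the real matrix ∂_d ∂_dᵀ (the up-down Laplacian in dimension d−1). -/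
open Matrix

namespace CMF
open Polynomial

/-- Cauchy–Binet for `M Mᵀ`, in Gram form. -/
lemma det_gram {R' : Type*} [CommRing R'] {m p : Type*} [Fintype m] [DecidableEq m] [Fintype p]
    [DecidableEq p] (M : Matrix m p R') :
    (M * Mᵀ).det = ∑ S ∈ (Finset.univ : Finset p).powersetCard (Fintype.card m),
      ((M.submatrix id (Subtype.val : S → p))ᵀ * (M.submatrix id (Subtype.val : S → p))).det := by
  have h := Matrix.charpoly_mul_comm' M Mᵀ
  have h2 := congrArg (fun q => q.coeff (Fintype.card p)) h
  simp only [coeff_X_pow_mul'] at h2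
  simp only [le_refl, if_true, Nat.sub_self] at h2
  rw [Matrix.det_eq_sign_charpoly_coeff, h2]
  split_ifs with hk
  · rw [Matrix.charpoly_coeff_eq_sum_minors _ _ hk, ← mul_assoc, ← mul_pow]
    simp only [mul_neg, mul_one, neg_neg, one_pow, one_mul]
    rfl
  · rw [Finset.powersetCard_eq_empty.2 (by simpa using hk)]
    simp

/-- charpoly coefficients of `B Bᵀ` -/
lemma coeff_charpoly {n p : Type*} [Fintype n] [DecidableEq n] [Fintype p]
    [DecidableEq p] (B : Matrix n p ℤ) (k : ℕ) (hk : k ≤ Fintype.card n) :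
    (B * Bᵀ).charpoly.coeff (Fintype.card n - k) = (-1) ^ k *
      ∑ R ∈ (Finset.univ : Finset n).powersetCard k, ∑ S ∈ (Finset.univ : Finset p).powersetCard k,
        ((B.submatrix (Subtype.val : R → n) (Subtype.val : S → p))ᵀ *
          (B.submatrix (Subtype.val : R → n) (Subtype.val : S → p))).det := by
  rw [Matrix.charpoly_coeff_eq_sum_minors _ _ hk]
  congr 1
  refine Finset.sum_congr rfl fun R hR => ?_
  have hc := (Finset.mem_powersetCard.1 hR).2
  have := det_gram (B.submatrix (Subtype.val : R → n) id)
  rw [Fintype.card_coe, hc] at this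
  exact this

lemma prod_roots (q : ℂ[X]) (hq : q.Monic) (N r : ℕ) (hN : q.natDegree = N) (hr : r ≤ N)
    (h1 : ∀ j < N - r, q.coeff j = 0) (h2 : q.coeff (N - r) ≠ 0) :
    (q.roots.filter (· ≠ 0)).prod = (-1) ^ r * q.coeff (N - r) := by
  have hs : q.Splits := IsAlgClosed.splits q
  have hprod : q = (q.roots.map (fun a => X - C a)).prod := by
    exact hs.eq_prod_roots_of_monic hq
  have hcard : Multiset.card q.roots = N := by rw [← hN]; exact hs.natDegree_eq_card_roots.symm
  set F := q.roots.filter (· ≠ 0) with hF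
  set Z := q.roots.filter (fun a => ¬ (a ≠ 0)) with hZ
  have hsplit : F + Z = q.roots := Multiset.filter_add_not _ _
  have hZr : Z = Multiset.replicate (Multiset.card Z) 0 := by
    rw [Multiset.eq_replicate]
    refine ⟨rfl, fun b hb => ?_⟩
    have := (Multiset.mem_filter.1 hb).2
    simpa using this
  have hq2 : q = X ^ (Multiset.card Z) * (F.map (fun a => X - C a)).prod := by
    conv_lhs => rw [hprod, ← hsplit, Multiset.map_add, Multiset.prod_add, hZr]
    simp [mul_comm]
  have hco : q.coeff (Multiset.card Z) = (-1) ^ (Multiset.card F) * F.prod := by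
    conv_lhs => rw [hq2]
    rw [coeff_X_pow_mul']
    simp only [le_refl, if_true, Nat.sub_self, coeff_zero_eq_eval_zero, eval_multiset_prod,
      Multiset.map_map]
    simp only [Function.comp_def, eval_sub, eval_X, eval_C, zero_sub]
    rw [Multiset.prod_map_neg]
  have hFne : F.prod ≠ 0 := by
    exact Multiset.prod_ne_zero (by simp [hF])
  have hcne : q.coeff (Multiset.card Z) ≠ 0 := by
    rw [hco]; exact mul_ne_zero (by simp) hFne
  have hFZ : Multiset.card F + Multiset.card Z = N := by
    rw [← Multiset.card_add, hsplit, hcard]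
  have hle : N - r ≤ Multiset.card Z := by
    by_contra hlt
    exact hcne (h1 _ (by omega))
  have hge : Multiset.card Z ≤ N - r := by
    by_contra hlt
    apply h2
    conv_lhs => rw [hq2]
    rw [coeff_X_pow_mul', if_neg (by omega)]
  have hZe : Multiset.card Z = N - r := le_antisymm hge hle
  have hFe : Multiset.card F = r := by omega
  rw [← hZe, hco, hFe, ← mul_assoc, ← mul_pow]
  simp

end CMF

namespace CMF

def Ind {m n : Type*} (A : Matrix m n ℤ) (T : Finset n) : Prop :=
  LinearIndependent ℚ (fun τ : T => fun σ => ((A σ τ.1 : ℤ) : ℚ))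

lemma index_core {G H₁ H₂ : Type*} [AddCommGroup G] [AddCommGroup H₁] [AddCommGroup H₂]
    (π : G →+ H₁) (f : G →+ H₂) (hπ : Function.Surjective π) (I : AddSubgroup G) (hI : I ≤ f.ker)
    (hd : π.ker ⊓ f.ker = ⊥) :
    (I.map π).index = (π.ker.map f).relIndex f.range * I.relIndex f.ker := by
  have h1 : (I.map π).index = (I ⊔ π.ker).index := by
    rw [AddSubgroup.index_map, AddMonoidHom.range_eq_top_of_surjective _ hπ, AddSubgroup.index_top,
      mul_one]
  have h2 : (π.ker.map f).relIndex f.range = (π.ker ⊔ f.ker).index := by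
    have := AddSubgroup.relIndex_map_map f π.ker ⊤
    rw [top_sup_eq, AddSubgroup.relIndex_top_right] at this
    rw [← this, AddMonoidHom.range_eq_map]
  have h3 : (I ⊔ π.ker) ⊓ f.ker = I := by
    rw [sup_inf_assoc_of_le _ hI, hd, sup_bot_eq]
  have h4 : (I ⊔ π.ker).relIndex ((I ⊔ π.ker) ⊔ f.ker) = I.relIndex f.ker := by
    rw [AddSubgroup.relIndex_sup_left, ← AddSubgroup.inf_relIndex_right, h3]
  have h5 : (I ⊔ π.ker) ⊔ f.ker = π.ker ⊔ f.ker := by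
    rw [sup_comm I, sup_assoc, sup_eq_right.2 hI]
  rw [h1, h2, ← h4, h5, mul_comm]
  refine (AddSubgroup.relIndex_mul_index ?_).symm
  rw [← h5]; exact le_sup_left

lemma card_torsion {M : Type*} [AddCommGroup M] (K N : Submodule ℤ M)
    (h : ∀ x ∈ K, ∃ c : ℤ, c ≠ 0 ∧ c • x ∈ N) :
    Nat.card (Submodule.torsion ℤ (K ⧸ Submodule.comap K.subtype N)) =
      N.toAddSubgroup.relIndex K.toAddSubgroup := by
  have ht : Submodule.torsion ℤ (K ⧸ Submodule.comap K.subtype N) = ⊤ := by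
    rw [eq_top_iff]
    rintro x -
    obtain ⟨x, rfl⟩ := Submodule.Quotient.mk_surjective _ x
    obtain ⟨c, hc, hx⟩ := h x x.2
    rw [Submodule.mem_torsion_iff]
    refine ⟨⟨c, mem_nonZeroDivisors_of_ne_zero hc⟩, ?_⟩
    change c • (Submodule.Quotient.mk x : K ⧸ Submodule.comap K.subtype N) = _
    rw [← Submodule.Quotient.mk_smul, Submodule.Quotient.mk_eq_zero]
    simpa using hx
  rw [ht]
  rw [Nat.card_congr (Submodule.topEquiv (R := ℤ)).toEquiv]
  rfl

lemma gram_det_eq {R S : Type*} [Fintype R] [DecidableEq R] [Fintype S] [DecidableEq S]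
    (hc : Fintype.card R = Fintype.card S) (Q : Matrix R S ℤ)
    (hQ : Function.Injective Q.mulVec) :
    (Qᵀ * Q).det = ((LinearMap.range Q.mulVecLin).toAddSubgroup.index : ℤ) ^ 2 ∧
      (Qᵀ * Q).det ≠ 0 := by
  obtain e := Fintype.equivOfCardEq hc
  let M : Matrix R R ℤ := Q.submatrix id e
  have hM : (Qᵀ * Q).det = M.det ^ 2 := by
    rw [← Matrix.det_submatrix_equiv_self e, ← Matrix.submatrix_mul_equiv Qᵀ Q e (Equiv.refl R) e,
      Matrix.det_mul, pow_two, ← Matrix.det_transpose]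
    rfl
  have hMv : ∀ v, M.mulVec v = Q.mulVec (v ∘ e.symm) := by
    intro v
    simp [M, Matrix.submatrix_mulVec_equiv]
  have hinj : Function.Injective M.mulVecLin := by
    intro v w h
    simp only [Matrix.mulVecLin_apply, hMv] at h
    have := hQ h
    ext i
    simpa using congrFun this (e i)
  have hrange : LinearMap.range M.mulVecLin = LinearMap.range Q.mulVecLin := by
    ext x
    constructor
    · rintro ⟨v, rfl⟩
      exact ⟨v ∘ e.symm, by simp [hMv]⟩
    · rintro ⟨v, rfl⟩
      refine ⟨v ∘ e, ?_⟩
      simp only [Matrix.mulVecLin_apply, hMv]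
      congr 1
      ext i; simp
  have key := Submodule.natAbs_det_equiv (LinearMap.range M.mulVecLin)
    (LinearEquiv.ofInjective M.mulVecLin hinj)
  have h2 : (LinearMap.range M.mulVecLin).subtype ∘ₗ AddMonoidHom.toIntLinearMap
      ((LinearEquiv.ofInjective M.mulVecLin hinj : _ ≃ₗ[ℤ] _) : (R → ℤ) →+ _) = M.mulVecLin := by
    ext v; rfl
  rw [h2] at key
  have h3 : LinearMap.det M.mulVecLin = M.det := by
    rw [← Matrix.toLin'_apply', LinearMap.det_toLin']
  rw [h3] at key
  have hne : M.det ≠ 0 := by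
    intro h0
    obtain ⟨v, hv, hv0⟩ := Matrix.exists_mulVec_eq_zero_iff.2 h0
    exact hv (hinj (by simpa using hv0))
  refine ⟨?_, by rw [hM]; exact pow_ne_zero _ hne⟩
  rw [hM, ← hrange]
  have h4 : (LinearMap.range M.mulVecLin).toAddSubgroup.index = M.det.natAbs := key.symm
  rw [h4, Int.natAbs_sq]

lemma gram_det_zero {R S : Type*} [Fintype R] [Fintype S] [DecidableEq S]
    (Q : Matrix R S ℤ) (g : S → ℚ) (hg : g ≠ 0) (h : (Q.map (Int.cast : ℤ → ℚ)) *ᵥ g = 0) :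
    (Qᵀ * Q).det = 0 := by
  have h1 : ((Qᵀ * Q).map (Int.cast : ℤ → ℚ)).det = 0 := by
    refine Matrix.exists_mulVec_eq_zero_iff.1 ⟨g, hg, ?_⟩
    have : (Qᵀ * Q).map (Int.cast : ℤ → ℚ) =
        (Qᵀ.map (Int.cast : ℤ → ℚ)) * (Q.map (Int.cast : ℤ → ℚ)) :=
      Matrix.map_mul (f := Int.castRingHom ℚ)
    rw [this, ← Matrix.mulVec_mulVec, h, Matrix.mulVec_zero]
  have h2 : ((Qᵀ * Q).map (Int.cast : ℤ → ℚ)).det = ((Qᵀ * Q).det : ℚ) :=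
    ((Int.castRingHom ℚ).map_det (Qᵀ * Q)).symm
  rw [h2] at h1
  exact_mod_cast h1

/-- real exactness implies rational exactness -/
lemma exact_rat {m n p : Type*} [Fintype n] [Fintype p] (A : Matrix m n ℤ) (B : Matrix n p ℤ)
    (h : LinearMap.ker (A.map (Int.cast : ℤ → ℝ)).mulVecLin =
      LinearMap.range (B.map (Int.cast : ℤ → ℝ)).mulVecLin) (x : n → ℚ)
    (hx : A.map (Int.cast : ℤ → ℚ) *ᵥ x = 0) : ∃ y : p → ℚ, B.map (Int.cast : ℤ → ℚ) *ᵥ y = x := by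
  obtain ⟨φ, hφ⟩ := LinearMap.exists_leftInverse_of_injective (Algebra.linearMap ℚ ℝ)
    (LinearMap.ker_eq_bot.2 (algebraMap ℚ ℝ).injective)
  have hφ' : ∀ q : ℚ, φ (q : ℝ) = q := fun q => by
    simpa using LinearMap.congr_fun hφ q
  have hxR : (fun i => (x i : ℝ)) ∈ LinearMap.ker (A.map (Int.cast : ℤ → ℝ)).mulVecLin := by
    rw [LinearMap.mem_ker]
    ext i
    have := congrFun hx i
    simp only [Matrix.mulVec, dotProduct, Matrix.map_apply, Pi.zero_apply,
      Matrix.mulVecLin_apply] at this ⊢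
    exact_mod_cast this
  rw [h] at hxR
  obtain ⟨y, hy⟩ := hxR
  refine ⟨fun j => φ (y j), ?_⟩
  ext i
  have := congrArg φ (congrFun hy i)
  simp only [Matrix.mulVec, dotProduct, Matrix.map_apply, Matrix.mulVecLin_apply, hφ',
    map_sum] at this ⊢
  rw [← this]
  refine Finset.sum_congr rfl fun j _ => ?_
  have := φ.map_smul (B i j : ℚ) (y j)
  rw [smul_eq_mul, Rat.smul_def] at this
  rw [← this]; simp

lemma rank_add {m n p : Type*} [Fintype n] [Fintype p] [Fintype m] (A : Matrix m n ℤ)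
    (B : Matrix n p ℤ) (hAB : A * B = 0)
    (h : LinearMap.ker (A.map (Int.cast : ℤ → ℝ)).mulVecLin =
      LinearMap.range (B.map (Int.cast : ℤ → ℝ)).mulVecLin) :
    (A.map (Int.cast : ℤ → ℚ)).rank + (B.map (Int.cast : ℤ → ℚ)).rank = Fintype.card n := by
  have h1 : LinearMap.ker (A.map (Int.cast : ℤ → ℚ)).mulVecLin =
      LinearMap.range (B.map (Int.cast : ℤ → ℚ)).mulVecLin := by
    apply le_antisymm
    · intro x hx
      obtain ⟨y, hy⟩ := exact_rat A B h x (by simpa using hx)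
      exact ⟨y, hy⟩
    · rintro _ ⟨y, rfl⟩
      have : A.map (Int.cast : ℤ → ℚ) * B.map (Int.cast : ℤ → ℚ) = 0 := by
        rw [← Matrix.map_zero (Int.cast : ℤ → ℚ) Int.cast_zero, ← hAB]
        exact (Matrix.map_mul (f := Int.castRingHom ℚ)).symm
      simp [this]
  have h2 := (A.map (Int.cast : ℤ → ℚ)).mulVecLin.finrank_range_add_finrank_ker
  rw [h1] at h2
  simpa [Matrix.rank] using h2

/-- columns of a forest span rationally -/
lemma forest_span {n p : Type*} [Fintype p] [Fintype n] (B : Matrix n p ℤ) (S : Finset p)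
    (hS : Ind B S) (hc : S.card = (B.map (Int.cast : ℤ → ℚ)).rank) (y : p → ℚ) :
    ∃ g : S → ℚ, (B.submatrix id (Subtype.val : S → p)).map (Int.cast : ℤ → ℚ) *ᵥ g =
      B.map (Int.cast : ℤ → ℚ) *ᵥ y := by
  set Q := (B.submatrix id (Subtype.val : S → p)).map (Int.cast : ℤ → ℚ) with hQ
  have hle : LinearMap.range Q.mulVecLin ≤
      LinearMap.range (B.map (Int.cast : ℤ → ℚ)).mulVecLin := by
    rw [Matrix.range_mulVecLin, Matrix.range_mulVecLin]
    apply Submodule.span_mono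
    rintro _ ⟨s, rfl⟩
    exact ⟨s.1, rfl⟩
  have hfin : Module.finrank ℚ (LinearMap.range Q.mulVecLin) =
      Module.finrank ℚ (LinearMap.range (B.map (Int.cast : ℤ → ℚ)).mulVecLin) := by
    have h1 : Module.finrank ℚ (LinearMap.range Q.mulVecLin) = S.card := by
      rw [Matrix.range_mulVecLin]
      have := finrank_span_eq_card (R := ℚ) (b := Q.col) hS
      rw [this, Fintype.card_coe]
    rw [h1, hc]; rfl
  have heq := Submodule.eq_of_le_of_finrank_eq hle hfin
  have : (B.map (Int.cast : ℤ → ℚ)).mulVecLin y ∈ LinearMap.range Q.mulVecLin := by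
    rw [heq]; exact ⟨y, rfl⟩
  exact this

lemma not_ind {m n : Type*} (A : Matrix m n ℤ) (T : Finset n) (h : ¬ Ind A T) :
    ∃ g : T → ℚ, g ≠ 0 ∧ (A.submatrix id (Subtype.val : T → n)).map (Int.cast : ℤ → ℚ) *ᵥ g = 0 := by
  rw [Ind, Fintype.linearIndependent_iff] at h
  push Not at h
  obtain ⟨g, hg, i, hi⟩ := h
  refine ⟨g, fun h0 => hi (by simp [h0]), ?_⟩
  rw [← hg]
  ext σ
  simp [Matrix.mulVec, dotProduct, mul_comm]

lemma ind_inj {m n : Type*} (A : Matrix m n ℤ) (T : Finset n) (h : Ind A T) (v : T → ℤ)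
    (hv : A.submatrix id (Subtype.val : T → n) *ᵥ v = 0) : v = 0 := by
  rw [Ind, Fintype.linearIndependent_iff] at h
  ext i
  have := h (fun i => (v i : ℚ)) ?_ i
  · exact_mod_cast this
  ext σ
  have := congrFun hv σ
  simp only [Matrix.mulVec, dotProduct, Matrix.submatrix_apply, id, Pi.zero_apply] at this
  simp only [Finset.sum_apply, Pi.smul_apply, smul_eq_mul, Pi.zero_apply]
  simp_rw [mul_comm (v _ : ℚ)]
  exact_mod_cast this

lemma exists_forest {m n : Type*} [Fintype m] [Fintype n] [DecidableEq n] (A : Matrix m n ℤ) :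
    ∃ T : Finset n, Ind A T ∧ T.card = (A.map (Int.cast : ℤ → ℚ)).rank := by
  obtain ⟨κ, f, hf, hspan, hli⟩ := exists_linearIndependent' ℚ (A.map (Int.cast : ℤ → ℚ)).col
  have : Fintype κ := Fintype.ofInjective f hf
  refine ⟨Finset.univ.image f, ?_, ?_⟩
  · let e : (Finset.univ.image f : Finset n) ≃ κ :=
      (Equiv.ofBijective (fun k : κ => (⟨f k, by simp⟩ : (Finset.univ.image f : Finset n)))
        ⟨fun a b h => hf (by simpa using h), fun ⟨x, hx⟩ => by
          obtain ⟨k, -, rfl⟩ := Finset.mem_image.1 hx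
          exact ⟨k, rfl⟩⟩).symm
    rw [← linearIndependent_equiv e] at hli
    have hfe : ∀ x, f (e x) = x.1 := fun x => congrArg Subtype.val (e.symm_apply_apply x)
    have hEq : (fun τ : (Finset.univ.image f : Finset n) => fun σ => ((A σ τ.1 : ℤ) : ℚ)) =
        ((A.map (Int.cast : ℤ → ℚ)).col ∘ f) ∘ e := by
      ext x σ
      simp [hfe]
    rw [Ind, hEq]
    exact hli
  · rw [Finset.card_image_of_injective _ hf, Matrix.rank_eq_finrank_span_cols, ← hspan,
      finrank_span_eq_card hli, Finset.card_univ]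

lemma mem_cspan {m n : Type*} (A : Matrix m n ℤ) (T : Finset n) (x : m → ℤ) :
    x ∈ Submodule.span ℤ ((fun τ => Aᵀ τ) '' (T : Set n)) ↔
      ∃ v : T → ℤ, A.submatrix id (Subtype.val : T → n) *ᵥ v = x := by
  have : (fun τ => Aᵀ τ) '' (T : Set n) =
      Set.range (A.submatrix id (Subtype.val : T → n)).col := by
    ext y; constructor
    · rintro ⟨t, ht, rfl⟩; exact ⟨⟨t, ht⟩, rfl⟩
    · rintro ⟨t, rfl⟩; exact ⟨t.1, t.2, rfl⟩
  rw [this, ← Matrix.range_mulVecLin]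
  rfl

lemma clear_denoms {m T : Type*} [Fintype T] (Q : Matrix m T ℤ) (x : m → ℤ) (g : T → ℚ)
    (h : Q.map (Int.cast : ℤ → ℚ) *ᵥ g = fun i => (x i : ℚ)) :
    ∃ c : ℤ, c ≠ 0 ∧ ∃ v : T → ℤ, Q *ᵥ v = c • x := by
  obtain ⟨b, hb⟩ := IsLocalization.exist_integer_multiples_of_finite (nonZeroDivisors ℤ) g
  choose v hv using hb
  refine ⟨b, nonZeroDivisors.ne_zero b.2, v, ?_⟩
  ext i
  have h1 := congrFun h i
  simp only [Matrix.mulVec, dotProduct, Matrix.map_apply, Pi.smul_apply, smul_eq_mul] at h1 ⊢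
  have h2 : ((∑ j, Q i j * v j : ℤ) : ℚ) = ((b * x i : ℤ) : ℚ) := by
    push_cast
    rw [← h1, Finset.mul_sum]
    refine Finset.sum_congr rfl fun j _ => ?_
    have := hv j
    simp only [algebraMap_int_eq, eq_intCast, zsmul_eq_mul] at this
    rw [this]; ring
  exact_mod_cast h2

end CMF

namespace CMF

/-- column span -/
def cs {m n : Type*} (A : Matrix m n ℤ) (T : Finset n) : Submodule ℤ (m → ℤ) :=
  Submodule.span ℤ ((fun τ => Aᵀ τ) '' (T : Set n))

/-- Gram determinant of a submatrix -/
def gd {n p : Type*} [DecidableEq p] (B : Matrix n p ℤ) (R : Finset n) (S : Finset p) : ℤ :=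
  ((B.submatrix (Subtype.val : R → n) (Subtype.val : S → p))ᵀ *
          (B.submatrix (Subtype.val : R → n) (Subtype.val : S → p))).det

/-- extension by zero of a vector supported on `T` -/
lemma mulVec_ext {K m n : Type*} [CommRing K] [Fintype n] [DecidableEq n] (A : Matrix m n K)
    (R : Finset n) (x : n → K) (hx : ∀ i ∈ R, x i = 0) :
    A *ᵥ x = A.submatrix id (Subtype.val : (Rᶜ : Finset n) → n) *ᵥ (fun i => x i.1) := by
  ext σ
  simp only [Matrix.mulVec, dotProduct, Matrix.submatrix_apply, id]
  rw [Finset.sum_coe_sort (Rᶜ) (fun i => A σ i * x i)]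
  symm
  apply Finset.sum_subset (Finset.subset_univ _)
  intro i _ hi
  rw [hx i (by simpa using hi), mul_zero]

lemma ext_vec {K n : Type*} [CommRing K] [Fintype n] [DecidableEq n] (R : Finset n)
    (v : (Rᶜ : Finset n) → K) : ∃ x : n → K, (∀ i ∈ R, x i = 0) ∧ (fun i : (Rᶜ : Finset n) => x i.1) = v := by
  refine ⟨fun i => if h : i ∈ Rᶜ then v ⟨i, h⟩ else 0, fun i hi => ?_, ?_⟩
  · simp [hi]
  · ext i
    simp only [i.2, dite_true]

section
variable {l m n p : Type*} [Fintype l] [Fintype m] [Fintype n] [Fintype p] [DecidableEq n]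
  [DecidableEq p]

lemma gd_zero (A : Matrix m n ℤ) (B : Matrix n p ℤ)
    (hd : LinearMap.ker (A.map (Int.cast : ℤ → ℝ)).mulVecLin =
      LinearMap.range (B.map (Int.cast : ℤ → ℝ)).mulVecLin)
    (R : Finset n) (S : Finset p) (hS : S.card = (B.map (Int.cast : ℤ → ℚ)).rank)
    (h : ¬ (Ind A Rᶜ ∧ Ind B S)) : gd B R S = 0 := by
  by_cases hB : Ind B S
  · have hA : ¬ Ind A Rᶜ := fun h' => h ⟨h', hB⟩
    obtain ⟨g, hg, hg0⟩ := not_ind A _ hA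
    obtain ⟨x, hx, rfl⟩ := ext_vec R g
    have hAx : A.map (Int.cast : ℤ → ℚ) *ᵥ x = 0 := by
      rw [mulVec_ext _ R x hx]; exact hg0
    obtain ⟨y, hy⟩ := exact_rat A B hd x hAx
    obtain ⟨g', hg'⟩ := forest_span B S hB hS y
    rw [hy] at hg'
    refine gram_det_zero _ g' ?_ ?_
    · rintro rfl
      rw [Matrix.mulVec_zero] at hg'
      apply hg
      rw [← hg']; rfl
    · ext i
      have := congrFun hg' i.1
      rw [hx _ i.2] at this
      exact this
  · obtain ⟨g, hg, hg0⟩ := not_ind B S hB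
    refine gram_det_zero _ g hg ?_
    ext i
    exact congrFun hg0 i.1

lemma gd_zero_of_card (B : Matrix n p ℤ) (R : Finset n) (S : Finset p)
    (hS : (B.map (Int.cast : ℤ → ℚ)).rank < S.card) : gd B R S = 0 := by
  have hB : ¬ Ind B S := by
    intro hB
    have h1 := finrank_span_eq_card (R := ℚ) hB
    have hle : Submodule.span ℚ (Set.range (fun τ : S => fun σ => ((B σ τ.1 : ℤ) : ℚ))) ≤
        Submodule.span ℚ (Set.range (B.map (Int.cast : ℤ → ℚ)).col) := by
      apply Submodule.span_mono
      rintro _ ⟨s, rfl⟩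
      exact ⟨s.1, rfl⟩
    have := Submodule.finrank_mono hle
    rw [h1, ← Matrix.rank_eq_finrank_span_cols, Fintype.card_coe] at this
    omega
  obtain ⟨g, hg, hg0⟩ := not_ind B S hB
  refine gram_det_zero _ g hg ?_
  ext i
  exact congrFun hg0 i.1

lemma torsion_fin (C : Matrix l m ℤ) (A : Matrix m n ℤ)
    (hd : LinearMap.ker (C.map (Int.cast : ℤ → ℝ)).mulVecLin =
      LinearMap.range (A.map (Int.cast : ℤ → ℝ)).mulVecLin)
    (T : Finset n) (hT : Ind A T) (hc : T.card = (A.map (Int.cast : ℤ → ℚ)).rank) :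
    ∀ x ∈ LinearMap.ker C.mulVecLin, ∃ c : ℤ, c ≠ 0 ∧ c • x ∈ cs A T := by
  intro x hx
  have hx' : C.map (Int.cast : ℤ → ℚ) *ᵥ (fun i => (x i : ℚ)) = 0 := by
    ext i
    have := congrFun (LinearMap.mem_ker.1 hx) i
    simp only [Matrix.mulVec, dotProduct, Matrix.map_apply, Pi.zero_apply,
      Matrix.mulVecLin_apply] at this ⊢
    exact_mod_cast this
  obtain ⟨y, hy⟩ := exact_rat C A hd _ hx'
  obtain ⟨g, hg⟩ := forest_span A T hT hc y
  rw [hy] at hg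
  obtain ⟨c, hc, v, hv⟩ := clear_denoms _ x g hg
  exact ⟨c, hc, (mem_cspan A T _).2 ⟨v, hv⟩⟩

lemma cs_le (C : Matrix l m ℤ) (A : Matrix m n ℤ) (T : Finset n) :
    cs A T ≤ LinearMap.range A.mulVecLin := by
  rw [Matrix.range_mulVecLin]
  apply Submodule.span_mono
  rintro _ ⟨t, -, rfl⟩
  exact ⟨t, rfl⟩

lemma range_le (C : Matrix l m ℤ) (A : Matrix m n ℤ) (h : C * A = 0) :
    LinearMap.range A.mulVecLin ≤ LinearMap.ker C.mulVecLin := by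
  rintro _ ⟨v, rfl⟩
  simp [h]

lemma gd_pos (A : Matrix m n ℤ) (B : Matrix n p ℤ) (hAB : A * B = 0)
    (R : Finset n) (S : Finset p) (hRS : R.card = S.card)
    (hA : Ind A Rᶜ) (hB : Ind B S) :
    gd B R S = (((cs A Rᶜ).toAddSubgroup.relIndex (LinearMap.range A.mulVecLin).toAddSubgroup *
      (cs B S).toAddSubgroup.relIndex (LinearMap.ker A.mulVecLin).toAddSubgroup : ℕ) : ℤ) ^ 2 ∧
      0 < gd B R S := by
  let π : (n → ℤ) →ₗ[ℤ] (R → ℤ) := LinearMap.funLeft ℤ ℤ Subtype.val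
  have hπ : Function.Surjective π := LinearMap.funLeft_surjective_of_injective _ _ _ Subtype.val_injective
  have hker : ∀ x : n → ℤ, π x = 0 → ∀ i ∈ R, x i = 0 := fun x hx i hi => congrFun hx ⟨i, hi⟩
  have hdis : ∀ x : n → ℤ, π x = 0 → A *ᵥ x = 0 → x = 0 := by
    intro x hx hAx
    rw [mulVec_ext A R x (hker x hx)] at hAx
    have := ind_inj A _ hA _ hAx
    ext i
    by_cases hi : i ∈ R
    · exact hker x hx i hi
    · exact congrFun this ⟨i, by simpa using hi⟩
  set Q := B.submatrix (Subtype.val : R → n) (Subtype.val : S → p) with hQ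
  have hBS : ∀ v, A *ᵥ (B.submatrix id (Subtype.val : S → p) *ᵥ v) = 0 := by
    intro v
    have h1 : B.submatrix id (Subtype.val : S → p) *ᵥ v ∈ cs B S := (mem_cspan B S _).2 ⟨v, rfl⟩
    have h2 := range_le A B hAB (cs_le A B S h1)
    simpa using h2
  have hQπ : ∀ v, Q *ᵥ v = π (B.submatrix id (Subtype.val : S → p) *ᵥ v) := fun v => rfl
  have hinj : Function.Injective Q.mulVec := by
    intro v w hvw
    have h0 : Q *ᵥ (v - w) = 0 := by rw [Matrix.mulVec_sub]; exact sub_eq_zero.2 hvw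
    rw [hQπ] at h0
    have := ind_inj B S hB _ (hdis _ h0 (hBS _))
    exact sub_eq_zero.1 this
  obtain ⟨h1, h2⟩ := gram_det_eq (by simpa using hRS) Q hinj
  have hcore := index_core π.toAddMonoidHom A.mulVecLin.toAddMonoidHom hπ (cs B S).toAddSubgroup
    (fun x hx => range_le A B hAB (cs_le A B S hx))
    (by
      rw [eq_bot_iff]
      rintro x ⟨hx1, hx2⟩
      exact hdis x hx1 hx2)
  have e1 : (cs B S).toAddSubgroup.map π.toAddMonoidHom =
      (LinearMap.range Q.mulVecLin).toAddSubgroup := by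
    ext y
    constructor
    · rintro ⟨x, hx, rfl⟩
      obtain ⟨v, rfl⟩ := (mem_cspan B S _).1 hx
      exact ⟨v, rfl⟩
    · rintro ⟨v, rfl⟩
      exact ⟨_, (mem_cspan B S _).2 ⟨v, rfl⟩, rfl⟩
  have e2 : π.toAddMonoidHom.ker.map A.mulVecLin.toAddMonoidHom = (cs A Rᶜ).toAddSubgroup := by
    ext y
    constructor
    · rintro ⟨x, hx, rfl⟩
      refine (mem_cspan A Rᶜ _).2 ⟨_, (mulVec_ext A R x (hker x hx)).symm⟩
    · intro hy
      obtain ⟨v, rfl⟩ := (mem_cspan A Rᶜ _).1 hy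
      obtain ⟨x, hx, rfl⟩ := ext_vec R v
      refine ⟨x, ?_, mulVec_ext A R x hx⟩
      change π x = 0
      ext i
      exact hx i.1 i.2
  rw [e1, e2] at hcore
  have h3 : gd B R S = (((cs A Rᶜ).toAddSubgroup.relIndex (LinearMap.range A.mulVecLin).toAddSubgroup *
      (cs B S).toAddSubgroup.relIndex (LinearMap.ker A.mulVecLin).toAddSubgroup : ℕ) : ℤ) ^ 2 := by
    refine h1.trans ?_
    rw [hcore]
    rfl
  refine ⟨h3, lt_of_le_of_ne ?_ (Ne.symm h2)⟩
  rw [h3]; positivity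

theorem core (C : Matrix l m ℤ) (A : Matrix m n ℤ) (B : Matrix n p ℤ)
    (hCA : C * A = 0) (hAB : A * B = 0)
    (hd1 : LinearMap.ker (A.map (Int.cast : ℤ → ℝ)).mulVecLin =
      LinearMap.range (B.map (Int.cast : ℤ → ℝ)).mulVecLin)
    (hd2 : LinearMap.ker (C.map (Int.cast : ℤ → ℝ)).mulVecLin =
      LinearMap.range (A.map (Int.cast : ℤ → ℝ)).mulVecLin) :
    (((∑ᶠ T ∈ {T : Finset n | Ind A T ∧ T.card = (A.map (Int.cast : ℤ → ℚ)).rank},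
      (Nat.card (Submodule.torsion ℤ (LinearMap.ker C.mulVecLin ⧸
          Submodule.comap (LinearMap.ker C.mulVecLin).subtype (cs A T)))) ^ 2) *
     (∑ᶠ S ∈ {S : Finset p | Ind B S ∧ S.card = (B.map (Int.cast : ℤ → ℚ)).rank},
      (Nat.card (Submodule.torsion ℤ (LinearMap.ker A.mulVecLin ⧸
          Submodule.comap (LinearMap.ker A.mulVecLin).subtype (cs B S)))) ^ 2) : ℕ) : ℂ) =
    ((Nat.card (Submodule.torsion ℤ (LinearMap.ker C.mulVecLin ⧸
          Submodule.comap (LinearMap.ker C.mulVecLin).subtype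
            (LinearMap.range A.mulVecLin))) ^ 2 : ℕ) : ℂ) * pseudoDet (B * Bᵀ) := by
  classical
  have hrank := rank_add A B hAB hd1
  obtain ⟨T₀, hT₀, hT₀c⟩ := exists_forest A
  obtain ⟨S₀, hS₀, hS₀c⟩ := exists_forest B
  set r := (B.map (Int.cast : ℤ → ℚ)).rank with hr
  have hrn : r ≤ Fintype.card n := by omega
  -- the characteristic polynomial
  have hq : ((B * Bᵀ).map (Int.cast : ℤ → ℂ)).charpoly =
      (B * Bᵀ).charpoly.map (Int.castRingHom ℂ) := Matrix.charpoly_map (B * Bᵀ) (Int.castRingHom ℂ)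
  set sg : ℤ := ∑ R ∈ (Finset.univ : Finset n).powersetCard r,
    ∑ S ∈ (Finset.univ : Finset p).powersetCard r, gd B R S with hsg
  have hcoeff : (B * Bᵀ).charpoly.coeff (Fintype.card n - r) = (-1) ^ r * sg :=
    coeff_charpoly B r hrn
  have hnonneg : ∀ R ∈ (Finset.univ : Finset n).powersetCard r,
      ∀ S ∈ (Finset.univ : Finset p).powersetCard r, 0 ≤ gd B R S := by
    intro R hR S hS
    have hRc := (Finset.mem_powersetCard.1 hR).2
    have hSc := (Finset.mem_powersetCard.1 hS).2
    by_cases h : Ind A Rᶜ ∧ Ind B S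
    · exact (gd_pos A B hAB R S (hRc.trans hSc.symm) h.1 h.2).2.le
    · exact (gd_zero A B hd1 R S hSc h).ge
  have hsgpos : 0 < sg := by
    have hR₀ : (T₀ᶜ).card = r := by rw [Finset.card_compl]; omega
    refine Finset.sum_pos' (fun R hR => Finset.sum_nonneg (hnonneg R hR)) ⟨T₀ᶜ, ?_, ?_⟩
    · simp [Finset.mem_powersetCard, hR₀]
    refine Finset.sum_pos' (hnonneg _ (by simp [Finset.mem_powersetCard, hR₀])) ⟨S₀, ?_, ?_⟩
    · simp [Finset.mem_powersetCard, hS₀c]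
    exact (gd_pos A B hAB _ S₀ (hR₀.trans hS₀c.symm) (by simpa using hT₀) hS₀).2
  have hpd : pseudoDet (B * Bᵀ) = (sg : ℂ) := by
    unfold pseudoDet
    rw [prod_roots _ (Matrix.charpoly_monic _) (Fintype.card n) r
      (Matrix.charpoly_natDegree_eq_dim _) hrn, hq, Polynomial.coeff_map, hcoeff]
    · rw [eq_intCast]; push_cast
      rw [← mul_assoc]
      simp [← mul_pow]
    · intro j hj
      rw [hq, Polynomial.coeff_map]
      have : j = Fintype.card n - (Fintype.card n - j) := by omega
      rw [this, coeff_charpoly B _ (by omega), Finset.sum_eq_zero]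
      · simp
      intro R hR
      refine Finset.sum_eq_zero fun S hS => gd_zero_of_card B R S ?_
      rw [(Finset.mem_powersetCard.1 hS).2]
      omega
    · rw [hq, Polynomial.coeff_map, hcoeff]
      simp [hsgpos.ne']
  rw [hpd]
  -- torsion orders as indices
  have htX : Nat.card (Submodule.torsion ℤ (LinearMap.ker C.mulVecLin ⧸
          Submodule.comap (LinearMap.ker C.mulVecLin).subtype (LinearMap.range A.mulVecLin))) =
      (LinearMap.range A.mulVecLin).toAddSubgroup.relIndex
        (LinearMap.ker C.mulVecLin).toAddSubgroup := by
    refine card_torsion _ _ fun x hx => ?_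
    obtain ⟨c, hc, h⟩ := torsion_fin C A hd2 T₀ hT₀ hT₀c x hx
    exact ⟨c, hc, cs_le C A T₀ h⟩
  rw [htX]
  set tX := (LinearMap.range A.mulVecLin).toAddSubgroup.relIndex
        (LinearMap.ker C.mulVecLin).toAddSubgroup with htXdef
  set iA : Finset n → ℕ := fun T => (cs A T).toAddSubgroup.relIndex
    (LinearMap.range A.mulVecLin).toAddSubgroup with hiA
  set iB : Finset p → ℕ := fun S => (cs B S).toAddSubgroup.relIndex
    (LinearMap.ker A.mulVecLin).toAddSubgroup with hiB
  have s1 : (∑ᶠ T ∈ {T : Finset n | Ind A T ∧ T.card = (A.map (Int.cast : ℤ → ℚ)).rank},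
      (Nat.card (Submodule.torsion ℤ (LinearMap.ker C.mulVecLin ⧸
          Submodule.comap (LinearMap.ker C.mulVecLin).subtype (cs A T)))) ^ 2) =
      ∑ R ∈ (Finset.univ : Finset n).powersetCard r,
        if Ind A Rᶜ then (iA Rᶜ * tX) ^ 2 else 0 := by
    rw [finsum_mem_eq_toFinset_sum, ← Finset.sum_filter]
    symm
    refine Finset.sum_nbij' (fun R => Rᶜ) (fun T => Tᶜ) ?_ ?_ ?_ ?_ ?_
    · intro R hR
      simp only [Finset.mem_filter, Finset.mem_powersetCard, Finset.subset_univ, true_and] at hR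
      simp only [Set.mem_toFinset, Set.mem_setOf_eq]
      refine ⟨hR.2, ?_⟩
      rw [Finset.card_compl]; omega
    · intro T hT
      simp only [Set.mem_toFinset, Set.mem_setOf_eq] at hT
      simp only [Finset.mem_filter, Finset.mem_powersetCard, Finset.subset_univ, true_and,
        compl_compl]
      refine ⟨?_, hT.1⟩
      rw [Finset.card_compl]; omega
    · intro R _; simp
    · intro R _; simp
    · intro R hR
      simp only [Finset.mem_filter, Finset.mem_powersetCard, Finset.subset_univ, true_and] at hR
      rw [card_torsion _ _ (torsion_fin C A hd2 Rᶜ hR.2 (by rw [Finset.card_compl]; omega))]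
      rw [hiA, htXdef]
      rw [AddSubgroup.relIndex_mul_relIndex _ _ _ (cs_le C A Rᶜ) (range_le C A hCA)]
  have s2 : (∑ᶠ S ∈ {S : Finset p | Ind B S ∧ S.card = r},
      (Nat.card (Submodule.torsion ℤ (LinearMap.ker A.mulVecLin ⧸
          Submodule.comap (LinearMap.ker A.mulVecLin).subtype (cs B S)))) ^ 2) =
      ∑ S ∈ (Finset.univ : Finset p).powersetCard r, if Ind B S then (iB S) ^ 2 else 0 := by
    rw [finsum_mem_eq_toFinset_sum, ← Finset.sum_filter]
    refine Finset.sum_congr ?_ ?_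
    · ext S
      simp [Finset.mem_powersetCard, and_comm]
    · intro S hS
      simp only [Finset.mem_filter, Finset.mem_powersetCard, Finset.subset_univ, true_and] at hS
      rw [card_torsion _ _ (torsion_fin A B hd1 S hS.2 hS.1)]
  rw [s1, s2, Finset.sum_mul_sum]
  have hfin : ((∑ R ∈ (Finset.univ : Finset n).powersetCard r,
      ∑ S ∈ (Finset.univ : Finset p).powersetCard r,
        (if Ind A Rᶜ then (iA Rᶜ * tX) ^ 2 else 0) * (if Ind B S then (iB S) ^ 2 else 0) : ℕ) : ℤ) =
      ((tX ^ 2 : ℕ) : ℤ) * sg := by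
    rw [hsg, Finset.mul_sum, Nat.cast_sum]
    refine Finset.sum_congr rfl fun R hR => ?_
    rw [Finset.mul_sum, Nat.cast_sum]
    refine Finset.sum_congr rfl fun S hS => ?_
    have hRc := (Finset.mem_powersetCard.1 hR).2
    have hSc := (Finset.mem_powersetCard.1 hS).2
    by_cases h : Ind A Rᶜ ∧ Ind B S
    · rw [(gd_pos A B hAB R S (hRc.trans hSc.symm) h.1 h.2).1, if_pos h.1, if_pos h.2]
      simp only [hiA, hiB]
      push_cast
      ring
    · rw [gd_zero A B hd1 R S hSc h]
      by_cases h1 : Ind A Rᶜ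
      · rw [if_neg (fun h2 => h ⟨h1, h2⟩)]; simp
      · rw [if_neg h1]; simp
  have := congrArg (Int.cast : ℤ → ℂ) hfin
  rw [Int.cast_mul, Int.cast_natCast, Int.cast_natCast] at this
  exact this

end

end CMF

/-- **The eigenvalue form of the cellular matrix-forest theorem.**
Here `d = e + 2 ≥ 2`; `a (k+1)` is the number of `k`-cells (and `a 0 = 1`), `bd k` is the
`k`-th boundary matrix (`bd 0` the all-ones row), and `H_{d-1}(X;ℝ) = H_{d-2}(X;ℝ) = 0`.
Then `τ_{d-1}(X) · τ_d(X) = t(ker ∂_{d-2}/im ∂_{d-1})² · λ(∂_d ∂_dᵀ)`. -/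
theorem cellular_matrix_forest_eigenvalues (e : ℕ) (a : ℕ → ℕ) (ha : a 0 = 1)
    (bd : (k : ℕ) → Matrix (Fin (a k)) (Fin (a (k + 1))) ℤ)
    (h0 : ∀ i j, bd 0 i j = 1)
    (hchain : ∀ k ≤ e + 1, bd k * bd (k + 1) = 0)
    (hd1 : LinearMap.ker ((bd (e + 1)).map (Int.cast : ℤ → ℝ)).mulVecLin =
      LinearMap.range ((bd (e + 2)).map (Int.cast : ℤ → ℝ)).mulVecLin)
    (hd2 : LinearMap.ker ((bd e).map (Int.cast : ℤ → ℝ)).mulVecLin =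
      LinearMap.range ((bd (e + 1)).map (Int.cast : ℤ → ℝ)).mulVecLin) :
    -- τ_{d-1}(X)
    letI τd1 : ℕ := ∑ᶠ T ∈ {T : Finset (Fin (a (e + 2))) |
        LinearIndependent ℚ (fun τ : T => fun σ => ((bd (e + 1) σ τ.1 : ℤ) : ℚ)) ∧
          T.card = ((bd (e + 1)).map (Int.cast : ℤ → ℚ)).rank},
      (Nat.card (Submodule.torsion ℤ
        (LinearMap.ker (bd e).mulVecLin ⧸
          Submodule.comap (LinearMap.ker (bd e).mulVecLin).subtype
            (Submodule.span ℤ ((fun τ => (bd (e + 1))ᵀ τ) '' ↑T))))) ^ 2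
    -- τ_d(X)
    letI τd : ℕ := ∑ᶠ T ∈ {T : Finset (Fin (a (e + 3))) |
        LinearIndependent ℚ (fun τ : T => fun σ => ((bd (e + 2) σ τ.1 : ℤ) : ℚ)) ∧
          T.card = ((bd (e + 2)).map (Int.cast : ℤ → ℚ)).rank},
      (Nat.card (Submodule.torsion ℤ
        (LinearMap.ker (bd (e + 1)).mulVecLin ⧸
          Submodule.comap (LinearMap.ker (bd (e + 1)).mulVecLin).subtype
            (Submodule.span ℤ ((fun τ => (bd (e + 2))ᵀ τ) '' ↑T))))) ^ 2
    -- t(ker ∂_{d-2} / im ∂_{d-1})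
    letI tX : ℕ :=
      Nat.card (Submodule.torsion ℤ
        (LinearMap.ker (bd e).mulVecLin ⧸
          Submodule.comap (LinearMap.ker (bd e).mulVecLin).subtype
            (LinearMap.range (bd (e + 1)).mulVecLin)))
    ((τd1 * τd : ℕ) : ℂ) = ((tX ^ 2 : ℕ) : ℂ) * pseudoDet (bd (e + 2) * (bd (e + 2))ᵀ) := by
  exact CMF.core (bd e) (bd (e + 1)) (bd (e + 2)) (hchain e (by omega)) (hchain (e + 1) le_rfl) hd1 hd2
end

section
/- Let G be a connected finite simple graph on vertex set V, |V| = n, with Laplacian matrix L(G), regarded as a ℤ-linear map ℤ^V → ℤ^V. Define the critical group K(G) to be the torsion subgroup of the quotient group ℤ^V / im_ℤ(L(G)). Then for every vertex v: (1) K(G) is isomorphic as an abelian group to ℤ^{V∖{v}} / im_ℤ(L̃), where L̃ is the reduced Laplacian obtained from L(G) by deleting the row and column indexed by v; and (2) the cardinality of K(G) equals the number of spanning trees of G. -/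
open Matrix

/-- `T` is (the edge set of) a spanning tree of `G`: `T ⊆ E(G)` and the graph `(V, T)`
is connected and acyclic. -/
def IsSpanningTree {V : Type*} (G : SimpleGraph V) (T : Set (Sym2 V)) : Prop :=
  T ⊆ G.edgeSet ∧ (SimpleGraph.fromEdgeSet T).Connected ∧ (SimpleGraph.fromEdgeSet T).IsAcyclic

/-- The number of spanning trees of `G`. -/
noncomputable def treeCount {V : Type*} (G : SimpleGraph V) : ℕ :=
  Nat.card {T : Set (Sym2 V) // IsSpanningTree G T}

/-- The critical group of `G`: the torsion subgroup of `ℤ^V / im_ℤ L(G)`. -/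
noncomputable def criticalGroup {V : Type*} [Fintype V] [DecidableEq V]
    (G : SimpleGraph V) [DecidableRel G.Adj] : AddSubgroup
      ((V → ℤ) ⧸ (LinearMap.range (SimpleGraph.lapMatrix ℤ G).mulVecLin).toAddSubgroup) :=
  AddCommGroup.torsion _


namespace CritGroup

set_option linter.unusedSectionVars false

section
variable {V : Type*} [Fintype V] [DecidableEq V] {v : V}

/-- Extend by zero at `v`. -/
def ext0 (x : {u : V // u ≠ v} → ℤ) (w : V) : ℤ := if h : w ≠ v then x ⟨w, h⟩ else 0

/-- One step of the parent function. -/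
def step (f : {u : V // u ≠ v} → V) (w : V) : V := if h : w ≠ v then f ⟨w, h⟩ else v

/-- All orbits of the parent function reach the root. -/
def Good (f : {u : V // u ≠ v} → V) : Prop := ∀ w, ∃ k, (step f)^[k] w = v

/-- The rows. -/
def rowMat (f : {u : V // u ≠ v} → V) : Matrix {u : V // u ≠ v} {u : V // u ≠ v} ℤ :=
  Matrix.of fun u x => (if x = u then 1 else 0) - (if (x : V) = f u then 1 else 0)

lemma ext0_self (x : {u : V // u ≠ v} → ℤ) : ext0 x v = 0 := by simp [ext0]

lemma ext0_coe (x : {u : V // u ≠ v} → ℤ) (u : {u : V // u ≠ v}) : ext0 x u = x u := by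
  simp [ext0, u.2]

lemma step_self (f : {u : V // u ≠ v} → V) : step f v = v := by simp [step]

lemma step_coe (f : {u : V // u ≠ v} → V) (u : {u : V // u ≠ v}) : step f u = f u := by
  simp [step, u.2]

lemma sum_ext0 (x : {u : V // u ≠ v} → ℤ) (w : V) :
    ∑ u : {u : V // u ≠ v}, (if (u : V) = w then x u else 0) = ext0 x w := by
  by_cases h : w = v
  · subst h
    rw [ext0_self]
    exact Finset.sum_eq_zero fun u _ => by simp [u.2]
  · have : ∀ u : {u : V // u ≠ v}, ((u : V) = w) = (u = ⟨w, h⟩) := by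
      intro u; simp [Subtype.ext_iff]
    simp [this, ext0, h]

lemma rowMat_mulVec (f : {u : V // u ≠ v} → V) (x : {u : V // u ≠ v} → ℤ) (u) :
    (Matrix.mulVec (rowMat f) x) u = x u - ext0 x (f u) := by
  simp only [Matrix.mulVec, dotProduct, rowMat, Matrix.of_apply, sub_mul, ite_mul, one_mul,
    zero_mul, Finset.sum_sub_distrib, sum_ext0]
  simp

/-- The shift map. -/
def shift (f : {u : V // u ≠ v} → V) : Module.End ℤ ({u : V // u ≠ v} → ℤ) where
  toFun x u := ext0 x (f u)
  map_add' x y := by ext u; simp only [ext0, Pi.add_apply]; split_ifs <;> simp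
  map_smul' c x := by ext u; simp only [ext0, Pi.smul_apply]; split_ifs <;> simp

lemma ext0_shift (f : {u : V // u ≠ v} → V) (x w) :
    ext0 (shift f x) w = ext0 x (step f w) := by
  by_cases h : w = v
  · subst h; rw [step_self, ext0_self, ext0_self]
  · lift w to {u : V // u ≠ v} using h
    rw [ext0_coe, step_coe]; rfl

lemma ext0_shift_pow (f : {u : V // u ≠ v} → V) (k : ℕ) (x w) :
    ext0 ((shift f ^ k) x) w = ext0 x ((step f)^[k] w) := by
  induction k generalizing w with
  | zero => simp
  | succ k ih =>
    rw [pow_succ', Module.End.mul_apply, ext0_shift, ih, Function.iterate_succ_apply]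

lemma iterate_self (f : {u : V // u ≠ v} → V) (k : ℕ) : (step f)^[k] v = v :=
  Function.iterate_fixed (step_self f) k

lemma det_good (f : {u : V // u ≠ v} → V) (hf : Good f) : (rowMat f).det = 1 := by
  have hnil : IsNilpotent (shift f) := by
    choose k hk using hf
    refine ⟨∑ w, k w, ?_⟩
    refine LinearMap.ext fun x => ?_
    funext u
    rw [← ext0_coe ((shift f ^ _) x) u, ext0_shift_pow]
    obtain ⟨m, hm⟩ := Nat.exists_eq_add_of_le (Finset.single_le_sum (f := k)
      (fun _ _ => Nat.zero_le _) (Finset.mem_univ (u : V)))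
    rw [hm, add_comm, Function.iterate_add_apply, hk, iterate_self, ext0_self]
    rfl
  have h1 : rowMat f = LinearMap.toMatrix' (algebraMap ℤ _ 1 - shift f) := by
    apply Matrix.toLin'.injective
    rw [Matrix.toLin'_toMatrix']
    refine LinearMap.ext fun x => ?_
    funext u
    rw [Matrix.toLin'_apply, rowMat_mulVec]
    simp [shift]
  rw [h1, LinearMap.det_toMatrix', ← LinearMap.eval_charpoly, hnil.charpoly_eq_X_pow_finrank]
  simp

lemma det_bad (f : {u : V // u ≠ v} → V) (hf : ¬ Good f) : (rowMat f).det = 0 := by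
  classical
  rw [← Matrix.exists_mulVec_eq_zero_iff]
  let P : V → Prop := fun w => ∃ k, (step f)^[k] w = v
  have hP : ∀ w, P (step f w) ↔ P w := by
    intro w
    constructor
    · rintro ⟨k, hk⟩; exact ⟨k + 1, hk⟩
    · rintro ⟨k, hk⟩
      refine ⟨k, ?_⟩
      rw [← Function.iterate_succ_apply, Function.iterate_succ_apply', hk, step_self]
  have hPv : P v := ⟨0, rfl⟩
  let x : {u : V // u ≠ v} → ℤ := fun u => if P u then 0 else 1
  have hx : ∀ w, ext0 x w = if P w then 0 else 1 := by
    intro w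
    by_cases h : w = v
    · subst h; rw [ext0_self, if_pos hPv]
    · lift w to {u : V // u ≠ v} using h
      rw [ext0_coe]
  refine ⟨x, ?_, ?_⟩
  · simp only [Good, not_forall] at hf
    obtain ⟨w, hw⟩ := hf
    intro h0
    have := hx w
    rw [h0, if_neg hw] at this
    simp [ext0] at this
  · funext u
    rw [rowMat_mulVec, hx, ← step_coe f u]
    simp only [x, hP, sub_self, Pi.zero_apply]

open Classical in
lemma det_reduced (G : SimpleGraph V) [DecidableRel G.Adj] (v : V) :
    ((SimpleGraph.lapMatrix ℤ G).submatrix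
          (Subtype.val : {u : V // u ≠ v} → V)
          (Subtype.val : {u : V // u ≠ v} → V)).det =
    (Nat.card {f : {u : V // u ≠ v} → V // (∀ u : {u : V // u ≠ v}, G.Adj u (f u)) ∧ Good f} : ℤ) := by
  let g : {u : V // u ≠ v} → V → ({u : V // u ≠ v} → ℤ) := fun u w x =>
    if G.Adj u w then (if x = u then 1 else 0) - (if (x : V) = w then 1 else 0) else 0
  have h1 : (SimpleGraph.lapMatrix ℤ G).submatrix
          (Subtype.val : {u : V // u ≠ v} → V)
          (Subtype.val : {u : V // u ≠ v} → V) = fun u => ∑ w, g u w := by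
    funext u x
    rw [Finset.sum_apply]
    have h0 : ∀ w, g u w x = (if G.Adj u w then (if x = u then 1 else 0) else 0) -
        (if (x : V) = w then (if G.Adj u w then 1 else 0) else 0) := by
      intro w; simp only [g]; split_ifs <;> simp
    simp only [h0, Finset.sum_sub_distrib]
    simp only [Matrix.submatrix_apply, SimpleGraph.lapMatrix, Matrix.sub_apply,
      SimpleGraph.degMatrix, Matrix.diagonal_apply, SimpleGraph.adjMatrix_apply]
    congr 1
    · rw [← Finset.sum_filter, Finset.sum_const, ← SimpleGraph.neighborFinset_eq_filter, SimpleGraph.card_neighborFinset_eq_degree]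
      by_cases h : x = u
      · subst h; simp
      · have : (u : V) ≠ x := fun h' => h (Subtype.ext h'.symm)
        simp [h, this]
    · simp
  rw [h1]
  have h2 := (Matrix.detRowAlternating (n := {u : V // u ≠ v}) (R := ℤ)).toMultilinearMap.map_sum g
  refine Eq.trans h2 ?_
  rw [Nat.card_eq_fintype_card, Fintype.card_subtype, Finset.card_filter, Nat.cast_sum]
  refine Finset.sum_congr rfl fun f _ => ?_
  change Matrix.det (fun u => g u (f u)) = _
  by_cases hadj : ∀ u : {u : V // u ≠ v}, G.Adj u (f u)
  · have : (fun u => g u (f u)) = rowMat f := by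
      funext u x
      simp [g, hadj, rowMat]
    rw [this]
    by_cases hf : Good f
    · simp [det_good, hf, hadj]
    · simp [det_bad, hf]
  · rw [if_neg (fun h => hadj h.1)]
    push Not at hadj
    obtain ⟨u, hu⟩ := hadj
    exact Matrix.det_eq_zero_of_row_eq_zero u fun x => by simp [g, hu]

/-- Edge set of a parent function. -/
def edges (f : {u : V // u ≠ v} → V) : Set (Sym2 V) := Set.range fun u : {u : V // u ≠ v} => s((u : V), f u)

lemma edges_tree (G : SimpleGraph V) (f : {u : V // u ≠ v} → V) (hadj : ∀ u : {u : V // u ≠ v}, G.Adj u (f u))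
    (hf : Good f) : IsSpanningTree G (edges f) := by
  have hsub : edges f ⊆ G.edgeSet := by
    rintro _ ⟨u, rfl⟩; exact hadj u
  have hreach : ∀ k w, (step f)^[k] w = v → (SimpleGraph.fromEdgeSet (edges f)).Reachable w v := by
    intro k
    induction k with
    | zero => intro w hw; rw [show w = v from hw]
    | succ k ih =>
      intro w hw
      by_cases h : w = v
      · subst h; exact SimpleGraph.Reachable.refl _
      · lift w to {u : V // u ≠ v} using h
        rw [Function.iterate_succ_apply, step_coe] at hw
        refine SimpleGraph.Reachable.trans (SimpleGraph.Adj.reachable ?_) (ih _ hw)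
        rw [SimpleGraph.fromEdgeSet_adj]
        exact ⟨⟨w, rfl⟩, (hadj w).ne⟩
  have hconn : (SimpleGraph.fromEdgeSet (edges f)).Connected := by
    have : Nonempty V := ⟨v⟩
    refine SimpleGraph.Connected.mk fun a b => ?_
    obtain ⟨k, hk⟩ := hf a
    obtain ⟨l, hl⟩ := hf b
    exact (hreach k a hk).trans (hreach l b hl).symm
  refine ⟨hsub, hconn, ?_⟩
  refine (SimpleGraph.isTree_iff_connected_and_card.2 ⟨hconn, ?_⟩).isAcyclic
  refine le_antisymm ?_ hconn.card_vert_le_card_edgeSet_add_one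
  have h1 : Nat.card (SimpleGraph.fromEdgeSet (edges f)).edgeSet ≤ Nat.card (edges f) := by
    refine Nat.card_mono (Set.toFinite _) ?_
    rw [SimpleGraph.edgeSet_fromEdgeSet]; exact Set.sdiff_subset
  have h2 : Nat.card (edges f) ≤ Nat.card {u : V // u ≠ v} := Finite.card_range_le _
  have h3 : Nat.card {u : V // u ≠ v} + 1 = Nat.card V := by
    have : 0 < Fintype.card V := Fintype.card_pos_iff.2 ⟨v⟩
    rw [Nat.card_eq_fintype_card, Nat.card_eq_fintype_card, Fintype.card_subtype_compl,
      Fintype.card_subtype_eq]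
    omega
  omega

lemma edges_inj (f f' : {u : V // u ≠ v} → V) (hf' : Good f')
    (h : edges f = edges f') : f = f' := by
  by_contra hne
  obtain ⟨u, hu⟩ := Function.ne_iff.1 hne
  let B : V → Prop := fun w => ∃ u : {u : V // u ≠ v}, (u : V) = w ∧ f u ≠ f' u
  have hstep : ∀ w, B w → B (step f' w) := by
    rintro _ ⟨u, rfl, hu⟩
    rw [step_coe]
    have : s((u : V), f' u) ∈ edges f := by rw [h]; exact ⟨u, rfl⟩
    obtain ⟨w, hw⟩ := this
    rcases Sym2.eq_iff.1 hw with ⟨h1, h2⟩ | ⟨h1, h2⟩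
    · have := Subtype.ext h1; subst this; exact absurd h2 hu
    · refine ⟨w, h1, fun hww => ?_⟩
      have hc : ∀ k, (step f')^[k] (u : V) = u ∨ (step f')^[k] (u : V) = w := by
        intro k
        induction k with
        | zero => left; rfl
        | succ k ih =>
          rw [Function.iterate_succ_apply']
          rcases ih with ih | ih
          · right; rw [ih, step_coe, h1]
          · left; rw [ih, step_coe, ← hww, h2]
      obtain ⟨k, hk⟩ := hf' u
      rcases hc k with h' | h'
      · exact u.2 (h'.symm.trans hk)
      · exact w.2 (h'.symm.trans hk)
  have hB : ∀ k, B ((step f')^[k] u) := by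
    intro k
    induction k with
    | zero => exact ⟨u, rfl, hu⟩
    | succ k ih => rw [Function.iterate_succ_apply']; exact hstep _ ih
  obtain ⟨k, hk⟩ := hf' u
  obtain ⟨w, hw, -⟩ := hB k
  exact w.2 (hw.trans hk)

lemma edges_surj (G : SimpleGraph V) (T : Set (Sym2 V)) (hT : IsSpanningTree G T) :
    ∃ f : {u : V // u ≠ v} → V, (∀ u : {u : V // u ≠ v}, G.Adj u (f u)) ∧ Good f ∧ edges f = T := by
  obtain ⟨hsub, hconn, hacyc⟩ := hT
  set H := SimpleGraph.fromEdgeSet T with hH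
  have hHG : H ≤ G := by
    intro a b hab
    exact hsub ((SimpleGraph.fromEdgeSet_adj T).1 hab).1
  have hex : ∀ u : {u : V // u ≠ v}, ∃ w, H.Adj u w ∧ H.dist w v < H.dist u v := by
    rintro ⟨u, hu⟩
    obtain ⟨p, hp⟩ := hconn.exists_walk_length_eq_dist u v
    cases p with
    | nil => exact absurd rfl hu
    | cons hadj q =>
      refine ⟨_, hadj, ?_⟩
      rw [← hp, SimpleGraph.Walk.length_cons]
      exact Nat.lt_succ_of_le (SimpleGraph.dist_le q)
  choose f hadj hdist using hex
  have hgood : Good f := by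
    have : ∀ n w, H.dist w v = n → ∃ k, (step f)^[k] w = v := by
      intro n
      induction n using Nat.strong_induction_on with
      | _ n ih =>
        intro w hw
        by_cases h : w = v
        · exact ⟨0, h⟩
        · lift w to {u : V // u ≠ v} using h
          obtain ⟨k, hk⟩ := ih _ (hw ▸ hdist w) (f w) rfl
          exact ⟨k + 1, by rw [Function.iterate_succ_apply, step_coe, hk]⟩
    exact fun w => this _ w rfl
  have hH2 := edges_tree H f hadj hgood
  refine ⟨f, fun u => hHG (hadj u), hgood, ?_⟩
  have hTe : H.edgeSet = T := by
    rw [hH, SimpleGraph.edgeSet_fromEdgeSet, sdiff_eq_left, Set.disjoint_left]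
    intro e he hd
    exact G.not_isDiag_of_mem_edgeSet (hsub he) hd
  have hFe : (SimpleGraph.fromEdgeSet (edges f)).edgeSet = edges f := by
    rw [SimpleGraph.edgeSet_fromEdgeSet, sdiff_eq_left, Set.disjoint_left]
    intro e he hd
    exact H.not_isDiag_of_mem_edgeSet (hH2.1 he) hd
  have c1 := (SimpleGraph.isTree_iff_connected_and_card.1 ⟨hH2.2.1, hH2.2.2⟩).2
  have c2 := (SimpleGraph.isTree_iff_connected_and_card.1 ⟨hconn, hacyc⟩).2
  rw [hFe] at c1
  rw [hTe] at c2
  refine Set.eq_of_subset_of_ncard_le (hTe ▸ hH2.1) ?_ (Set.toFinite _)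
  rw [← Nat.card_coe_set_eq, ← Nat.card_coe_set_eq]
  omega

lemma card_parents (G : SimpleGraph V) (v : V) :
    Nat.card {f : {u : V // u ≠ v} → V // (∀ u : {u : V // u ≠ v}, G.Adj u (f u)) ∧ Good f} = treeCount G := by
  refine Nat.card_congr (Equiv.ofBijective
    (fun f => ⟨edges f.1, edges_tree G f.1 f.2.1 f.2.2⟩) ⟨?_, ?_⟩)
  · intro f f' h
    exact Subtype.ext (edges_inj f.1 f'.1 f'.2.2 (congrArg Subtype.val h))
  · rintro ⟨T, hT⟩
    obtain ⟨f, h1, h2, h3⟩ := edges_surj (v := v) G T hT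
    exact ⟨⟨f, h1, h2⟩, Subtype.ext h3⟩

lemma treeCount_pos (G : SimpleGraph V) (hG : G.Connected) : 0 < treeCount G := by
  obtain ⟨T, hT, hT2⟩ := hG.exists_isTree_le
  have : Nonempty {T : Set (Sym2 V) // IsSpanningTree G T} :=
    ⟨⟨T.edgeSet, SimpleGraph.edgeSet_mono hT, by
      rw [SimpleGraph.fromEdgeSet_edgeSet]; exact ⟨hT2.connected, hT2.isAcyclic⟩⟩⟩
  exact Nat.card_pos

lemma card_quot {n : Type*} [Fintype n] [DecidableEq n] (M : Matrix n n ℤ) (h : M.det ≠ 0) :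
    Nat.card ((n → ℤ) ⧸ LinearMap.range M.mulVecLin) = M.det.natAbs := by
  have hinj : Function.Injective M.mulVecLin := by
    rw [← LinearMap.ker_eq_bot, LinearMap.ker_eq_bot']
    intro x hx
    exact Matrix.eq_zero_of_mulVec_eq_zero h hx
  let e := LinearEquiv.ofInjective M.mulVecLin hinj
  rw [← Submodule.natAbs_det_equiv _ e, ← LinearMap.det_toLin' M]
  rfl

/-- Extend to a vector with zero sum. -/
def extS (v : V) : ({u : V // u ≠ v} → ℤ) →+ (V → ℤ) where
  toFun x w := if h : w ≠ v then x ⟨w, h⟩ else - ∑ u, x u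
  map_zero' := by ext w; simp
  map_add' x y := by
    ext w
    by_cases h : w = v
    · simp [h, Finset.sum_add_distrib]; ring
    · simp [h]

lemma extS_coe (x : {u : V // u ≠ v} → ℤ) (u : {u : V // u ≠ v}) : extS v x u = x u := by
  simp [extS, u.2]

lemma extS_self (x : {u : V // u ≠ v} → ℤ) : extS v x v = - ∑ u, x u := by
  simp [extS]

lemma sum_split (y : V → ℤ) (v : V) : ∑ w, y w = y v + ∑ u : {u : V // u ≠ v}, y u := by
  rw [← Finset.add_sum_erase _ _ (Finset.mem_univ v)]
  congr 1
  refine Finset.sum_subtype _ (fun x => ?_) _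
  simp

lemma eq_extS (y : V → ℤ) (hy : ∑ w, y w = 0) : extS v (fun u => y u) = y := by
  ext w
  by_cases h : w = v
  · subst h
    rw [extS_self]
    have := sum_split y w
    omega
  · lift w to {u : V // u ≠ v} using h
    rw [extS_coe]

lemma sum_lap (G : SimpleGraph V) [DecidableRel G.Adj] (y : V → ℤ) :
    ∑ w, (Matrix.mulVec (G.lapMatrix ℤ) y) w = 0 := by
  have h : (fun _ => 1) ⬝ᵥ (Matrix.mulVec (G.lapMatrix ℤ) y) = 0 := by
    rw [Matrix.dotProduct_mulVec, ← Matrix.mulVec_transpose, G.isSymm_lapMatrix ℤ,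
      SimpleGraph.lapMatrix_mulVec_const_eq_zero, zero_dotProduct]
  simpa [dotProduct] using h

lemma red_mulVec (G : SimpleGraph V) [DecidableRel G.Adj] (y : V → ℤ) (u : {u : V // u ≠ v}) :
    Matrix.mulVec (G.lapMatrix ℤ) y u = (Matrix.mulVec ((G.lapMatrix ℤ).submatrix
      (Subtype.val : {u : V // u ≠ v} → V) (Subtype.val : {u : V // u ≠ v} → V))
      (fun t => y t - y v)) u := by
  have h : Matrix.mulVec (G.lapMatrix ℤ) y = Matrix.mulVec (G.lapMatrix ℤ) (fun t => y t - y v) := by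
    have : (fun t => y t - y v) = y - y v • (fun _ => 1) := by ext t; simp
    rw [this, Matrix.mulVec_sub, Matrix.mulVec_smul, SimpleGraph.lapMatrix_mulVec_const_eq_zero]
    simp
  rw [h]
  simp only [Matrix.mulVec, dotProduct, Matrix.submatrix_apply]
  rw [sum_split _ v]
  simp

theorem main_iso (G : SimpleGraph V) [DecidableRel G.Adj] (v : V)
    (hdet : ((SimpleGraph.lapMatrix ℤ G).submatrix
          (Subtype.val : {u : V // u ≠ v} → V)
          (Subtype.val : {u : V // u ≠ v} → V)).det ≠ 0) :
    Nonempty ((criticalGroup G) ≃+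
      (({u : V // u ≠ v} → ℤ) ⧸
        LinearMap.range (((SimpleGraph.lapMatrix ℤ G).submatrix
          (Subtype.val : {u : V // u ≠ v} → V)
          (Subtype.val : {u : V // u ≠ v} → V)).mulVecLin))) := by
  set M := (SimpleGraph.lapMatrix ℤ G).submatrix
          (Subtype.val : {u : V // u ≠ v} → V)
          (Subtype.val : {u : V // u ≠ v} → V) with hM
  set L := G.lapMatrix ℤ with hL
  let N := (LinearMap.range L.mulVecLin).toAddSubgroup
  let q : ({u : V // u ≠ v} → ℤ) →+ ((V → ℤ) ⧸ N) := (QuotientAddGroup.mk' N).comp (extS v)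
  have hq0 : ∀ x, q x = 0 ↔ x ∈ LinearMap.range M.mulVecLin := by
    intro x
    have h1 : q x = 0 ↔ extS v x ∈ N := QuotientAddGroup.eq_zero_iff _
    rw [h1]
    constructor
    · rintro ⟨y, hy⟩
      refine ⟨fun t => y t - y v, ?_⟩
      ext u
      rw [← extS_coe x u, ← hy]
      exact (red_mulVec G y u).symm
    · rintro ⟨y, rfl⟩
      refine ⟨ext0 y, ?_⟩
      have h2 := eq_extS (v := v) _ (sum_lap G (ext0 y))
      refine h2.symm.trans (congrArg _ ?_)
      ext u
      rw [red_mulVec]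
      simp only [ext0_coe, ext0_self, sub_zero]
      rfl
  have htors : ∀ x, q x ∈ criticalGroup G := by
    intro x
    refine isOfFinAddOrder_iff_zsmul_eq_zero.2 ⟨M.det, hdet, ?_⟩
    rw [← map_zsmul, hq0]
    refine ⟨Matrix.mulVec M.adjugate x, ?_⟩
    rw [Matrix.mulVecLin_apply, Matrix.mulVec_mulVec, Matrix.mul_adjugate, Matrix.smul_mulVec,
      Matrix.one_mulVec]
  let r : ({u : V // u ≠ v} → ℤ) →+ criticalGroup G := q.codRestrict (criticalGroup G) htors
  have hr0 : ∀ x, r x = 0 ↔ x ∈ LinearMap.range M.mulVecLin := by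
    intro x
    rw [← hq0, ← Subtype.coe_inj]; rfl
  have hsurj : Function.Surjective r := by
    rintro ⟨z, hz⟩
    obtain ⟨y, rfl⟩ := QuotientAddGroup.mk_surjective z
    obtain ⟨n, hn, hn0⟩ := isOfFinAddOrder_iff_zsmul_eq_zero.1 hz
    have h3 : n • y ∈ N := (QuotientAddGroup.eq_zero_iff _).1 hn0
    obtain ⟨t, ht⟩ := h3
    have h4 := sum_lap G t
    have ht' : Matrix.mulVec (G.lapMatrix ℤ) t = n • y := ht
    rw [ht'] at h4
    simp only [Pi.smul_apply, smul_eq_mul, ← Finset.mul_sum] at h4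
    have h5 := (mul_eq_zero.1 h4).resolve_left hn
    refine ⟨fun u => y u, Subtype.ext ?_⟩
    change QuotientAddGroup.mk' N (extS v _) = _
    rw [eq_extS y h5]; rfl
  let l := (LinearMap.range M.mulVecLin).liftQ r.toIntLinearMap (fun x hx => (hr0 x).2 hx)
  refine ⟨(AddEquiv.ofBijective l.toAddMonoidHom ⟨?_, ?_⟩).symm⟩
  · rw [injective_iff_map_eq_zero]
    intro a ha
    obtain ⟨x, rfl⟩ := Submodule.Quotient.mk_surjective _ a
    exact (Submodule.Quotient.mk_eq_zero _).2 ((hr0 x).1 ha)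
  · intro z
    obtain ⟨x, hx⟩ := hsurj z
    exact ⟨Submodule.Quotient.mk x, hx⟩

end
end CritGroup

/-- **Biggs' theorem on the critical group**: for a connected graph `G` and any vertex
`v`, the critical group `K(G)` is isomorphic to `ℤ^{V∖{v}} / im_ℤ L̃` where `L̃` is the
reduced Laplacian at `v`, and `|K(G)| = τ(G)`. -/
theorem critical_group_theorem {V : Type*} [Fintype V] [DecidableEq V]
    (G : SimpleGraph V) [DecidableRel G.Adj] (hG : G.Connected) (v : V) :
    Nonempty ((criticalGroup G) ≃+
      (({u : V // u ≠ v} → ℤ) ⧸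
        LinearMap.range (((SimpleGraph.lapMatrix ℤ G).submatrix
          (Subtype.val : {u : V // u ≠ v} → V)
          (Subtype.val : {u : V // u ≠ v} → V)).mulVecLin))) ∧
    Nat.card (criticalGroup G) = treeCount G := by
  have hd := CritGroup.det_reduced G v
  rw [CritGroup.card_parents] at hd
  have hpos := CritGroup.treeCount_pos G hG
  have hne := hd.trans_ne (Int.natCast_ne_zero.2 hpos.ne')
  obtain ⟨e⟩ := CritGroup.main_iso G v hne
  refine ⟨⟨e⟩, ?_⟩
  rw [Nat.card_congr e.toEquiv, CritGroup.card_quot _ hne, hd, Int.natAbs_natCast]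
end
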